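/- Lemma 2.1(ii): Let v be a classical solution of v_t = v_rr + ((m−1)/r) v_r − (b(r,t)/r²) v on [0,R] × (t1,t2) satisfying the boundary condition (1.5) and v(0,t) = 0 for all t ∈ (t1,t2), and suppose v is not identically zero. Then for any t0 ∈ (t1,t2) and any r0 ∈ (0,R) there exist a nonnegative integer k and a nontrivial polynomial ψ solving the Hermite equation ψ'' − (1/2) r ψ' + (k/2) ψ = 0 on ℝ, such that the rescaled functions r ↦ ε^{−k} v(r0 + εr, t0 − ε²) converge to ψ as ε → 0⁺, uniformly together with their first and second r-derivatives on every compact subset of ℝ. -/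

import Mathlib

open Set Filter

/-!
Reverse time about `(r₀, t₀)`: a cut-off `u (x, s)` of `v (r₀ + x) (t₀ - s)` satisfies
`|uₛ + uₓₓ| ≤ C (|u| + |uₓ|)` near the origin. Give `∂ₓⁱ ∂ₛʲ u (0, 0)` the parabolic weight
`i + 2j`.

If some such derivative is non-zero, let `k` be the least weight at which this happens and `P` the
part of weight `k` of the Taylor polynomial. Then `ε⁻ᵏ u (εx, ε²s) → P (x, s)`, and rescaling the
inequality gives `Pₛ + Pₓₓ = 0`. Euler's identity `x Pₓ + 2s Pₛ = k P` at `s = 1` turns this into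
the Hermite equation for `P (·, 1)`, whose degree must then be `k`, so that `∂ₓᵏ u (0, 0) ≠ 0`.

If all of them vanish, consider the frequency `s D / H` of `u` with respect to the Gaussian
`exp (-x² / 4s)`. It is almost monotone as long as `H` dominates the cut-off errors, and then
`H ≥ c sᴸ`, against the infinite order of vanishing. Hence `H` is exponentially small along a
sequence `s → 0`, and `u (·, 0) = 0` near `0`. Together with the first case this shows that the set
where `v (·, t₀)` vanishes locally is open and closed in `(0, R)`, so `v (·, t₀) = 0`. Weighted
energy estimates, Gronwall's inequality forward and the log-convexity method (Dirichlet quotients)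
backward in time, then give `v = 0` everywhere.
-/

namespace RescaledLimit

open scoped ContDiff Nat Topology

section PartialDerivatives

variable {f : ℝ × ℝ → ℝ}

/-- The partial derivative of `f (x, s)` in the space variable `x`. -/
noncomputable def dx (f : ℝ × ℝ → ℝ) : ℝ × ℝ → ℝ := fun p => fderiv ℝ f p (1, 0)

/-- The partial derivative of `f (x, s)` in the time variable `s`. -/
noncomputable def ds (f : ℝ × ℝ → ℝ) : ℝ × ℝ → ℝ := fun p => fderiv ℝ f p (0, 1)

lemma contDiff_dx (hf : ContDiff ℝ ∞ f) : ContDiff ℝ ∞ (dx f) :=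
  (hf.fderiv_right (m := ∞) (by simp)).clm_apply contDiff_const

lemma contDiff_ds (hf : ContDiff ℝ ∞ f) : ContDiff ℝ ∞ (ds f) :=
  (hf.fderiv_right (m := ∞) (by simp)).clm_apply contDiff_const

lemma hasDerivAt_dx {x s : ℝ} (hf : DifferentiableAt ℝ f (x, s)) :
    HasDerivAt (fun y => f (y, s)) (dx f (x, s)) x :=
  hf.hasFDerivAt.comp_hasDerivAt x ((hasDerivAt_id x).prodMk (hasDerivAt_const x s))

lemma hasDerivAt_ds {x s : ℝ} (hf : DifferentiableAt ℝ f (x, s)) :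
    HasDerivAt (fun t => f (x, t)) (ds f (x, s)) s :=
  hf.hasFDerivAt.comp_hasDerivAt s ((hasDerivAt_const s x).prodMk (hasDerivAt_id s))

lemma ds_dx_comm (hf : ContDiff ℝ 2 f) : ds (dx f) = dx (ds f) := by
  funext p
  have hd : DifferentiableAt ℝ (fderiv ℝ f) p :=
    (hf.fderiv_right (m := 1) (by norm_num)).differentiable one_ne_zero p
  have apply_fderiv (w z : ℝ × ℝ) :
      fderiv ℝ (fun q => fderiv ℝ f q w) p z = fderiv ℝ (fderiv ℝ f) p z w := by
    simp [fderiv_clm_apply hd (differentiableAt_const w)]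
  exact (apply_fderiv _ _).trans <|
    ((hf.contDiffAt.isSymmSndFDerivAt (by simp)).eq (0, 1) (1, 0)).trans (apply_fderiv _ _).symm

lemma hasDerivAt_dilation {F : ℝ × ℝ → ℝ} {x s : ℝ} (hF : DifferentiableAt ℝ F (x, s)) :
    HasDerivAt (fun μ : ℝ => F (μ * x, μ ^ 2 * s)) (x * dx F (x, s) + 2 * s * ds F (x, s)) 1 := by
  have hcurve : HasDerivAt (fun μ : ℝ => (μ * x, μ ^ 2 * s)) (x, 2 * s) 1 := by
    simpa using ((hasDerivAt_id (1 : ℝ)).mul_const x).prodMk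
      ((hasDerivAt_pow 2 (1 : ℝ)).mul_const s)
  have hF' : HasFDerivAt F (fderiv ℝ F (x, s)) (1 * x, 1 ^ 2 * s) := by simpa using hF.hasFDerivAt
  refine (hF'.comp_hasDerivAt 1 hcurve).congr_deriv ?_
  have hsplit : ((x, 2 * s) : ℝ × ℝ) = x • (1, 0) + (2 * s) • (0, 1) := by simp
  rw [hsplit, map_add, map_smul, map_smul]
  rfl

/-- The Taylor coefficient `∂ₓⁱ ∂ₛʲ f (0, 0)`; its parabolic weight is `i + 2 * j`. -/
noncomputable def jet (f : ℝ × ℝ → ℝ) (i j : ℕ) : ℝ := (dx^[i] (ds^[j] f)) (0, 0)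

lemma jet_ds (f : ℝ × ℝ → ℝ) (i j : ℕ) : jet (ds f) i j = jet f i (j + 1) := rfl

lemma contDiff_iterate_dx (hf : ContDiff ℝ ∞ f) (n : ℕ) : ContDiff ℝ ∞ (dx^[n] f) := by
  induction n generalizing f with
  | zero => exact hf
  | succ _ ih => exact ih (contDiff_dx hf)

lemma iterate_ds_dx_comm (hf : ContDiff ℝ ∞ f) (j : ℕ) : ds^[j] (dx f) = dx (ds^[j] f) := by
  induction j generalizing f with
  | zero => rfl
  | succ n ih =>
    simp only [Function.iterate_succ_apply]
    rw [ds_dx_comm (contDiff_infty.1 hf 2), ih (contDiff_ds hf)]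

lemma jet_dx (hf : ContDiff ℝ ∞ f) (i j : ℕ) : jet (dx f) i j = jet f (i + 1) j := by
  simp only [jet, iterate_ds_dx_comm hf, Function.iterate_succ_apply]

end PartialDerivatives

section ParabolicTaylor

variable {f : ℝ × ℝ → ℝ} {k d : ℕ}

/-- The Taylor coefficient `jet f i j` if `x ^ i * s ^ j` has parabolic degree `k - d`, else `0`.
With this convention `d` counts the derivatives already taken: `∂ₓ` and `∂ₛ` raise `d` by one and
two and leave `k` alone. -/
noncomputable def parabolicCoeff (k d : ℕ) (f : ℝ × ℝ → ℝ) (i j : ℕ) : ℝ :=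
  if i + 2 * j + d = k then jet f i j else 0

/-- The parabolically homogeneous Taylor polynomial of `f` of degree `k - d` at the origin, zero
for `k < d`. -/
noncomputable def parabolicPart (k d : ℕ) (f : ℝ × ℝ → ℝ) (p : ℝ × ℝ) : ℝ :=
  ∑ j ∈ Finset.range (k + 1), (∑ i ∈ Finset.range (k + 1),
    parabolicCoeff k d f i j * (p.1 ^ i / i !)) * (p.2 ^ j / j !)

/-- The jet of `f` vanishes in every parabolic weight `w` with `w + d < k`. -/
def JetVanishes (k d : ℕ) (f : ℝ × ℝ → ℝ) : Prop := ∀ i j, i + 2 * j + d < k → jet f i j = 0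

lemma JetVanishes.dx (h : JetVanishes k d f) (hf : ContDiff ℝ ∞ f) :
    JetVanishes k (d + 1) (dx f) := fun i j hij => by
  rw [jet_dx hf]; exact h _ _ (by omega)

lemma JetVanishes.ds (h : JetVanishes k d f) : JetVanishes k (d + 2) (ds f) := fun i j hij => by
  rw [jet_ds]; exact h _ _ (by omega)

lemma hasDerivAt_sum_pow_div_factorial (N : ℕ) (a : ℕ → ℝ) (x : ℝ) :
    HasDerivAt (fun y => ∑ i ∈ Finset.range (N + 1), a i * (y ^ i / i !))
      (∑ i ∈ Finset.range N, a (i + 1) * (x ^ i / i !)) x := by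
  simp only [Finset.sum_range_succ' _ N, pow_zero]
  refine (HasDerivAt.fun_sum fun i _ => HasDerivAt.const_mul _ ?_).add_const _
  refine ((hasDerivAt_pow (i + 1) x).div_const _).congr_deriv ?_
  rw [Nat.factorial_succ]
  push_cast
  field_simp

lemma contDiff_parabolicPart : ContDiff ℝ ∞ (parabolicPart k d f) := by
  unfold parabolicPart
  fun_prop

lemma differentiable_parabolicPart : Differentiable ℝ (parabolicPart k d f) :=
  contDiff_parabolicPart.differentiable (by simp)

lemma parabolicCoeff_dx (hf : ContDiff ℝ ∞ f) (i j : ℕ) :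
    parabolicCoeff k (d + 1) (dx f) i j = parabolicCoeff k d f (i + 1) j := by
  simp only [parabolicCoeff, jet_dx hf, show i + 2 * j + (d + 1) = i + 1 + 2 * j + d by omega]

lemma parabolicCoeff_ds (i j : ℕ) :
    parabolicCoeff k (d + 2) (ds f) i j = parabolicCoeff k d f i (j + 1) := by
  simp only [parabolicCoeff, jet_ds, show i + 2 * j + (d + 2) = i + 2 * (j + 1) + d by omega]

lemma parabolicCoeff_eq_zero {i j : ℕ} (h : k < i + 2 * j + d) : parabolicCoeff k d f i j = 0 :=
  if_neg h.ne'

lemma dx_parabolicPart (hf : ContDiff ℝ ∞ f) :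
    dx (parabolicPart k d f) = parabolicPart k (d + 1) (dx f) := by
  funext p
  have hderiv := HasDerivAt.fun_sum fun j (_ : j ∈ Finset.range (k + 1)) =>
    (hasDerivAt_sum_pow_div_factorial k (parabolicCoeff k d f · j) p.1).mul_const (p.2 ^ j / j !)
  refine (hasDerivAt_dx (differentiable_parabolicPart p)).unique
    (hderiv.congr_deriv (Finset.sum_congr rfl fun j _ => ?_))
  simp only [parabolicCoeff_dx hf]
  rw [Finset.sum_range_succ _ k, parabolicCoeff_eq_zero (by omega), zero_mul, add_zero]

lemma ds_parabolicPart : ds (parabolicPart k d f) = parabolicPart k (d + 2) (ds f) := by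
  funext p
  refine (hasDerivAt_ds (differentiable_parabolicPart p)).unique
    ((hasDerivAt_sum_pow_div_factorial k (fun j => ∑ i ∈ Finset.range (k + 1),
      parabolicCoeff k d f i j * (p.1 ^ i / i !)) p.2).congr_deriv ?_)
  simp only [parabolicPart, parabolicCoeff_ds]
  rw [Finset.sum_range_succ _ k, Finset.sum_eq_zero (s := Finset.range (k + 1)), zero_mul, add_zero]
  intro i _
  rw [parabolicCoeff_eq_zero (by omega), zero_mul]

lemma parabolicPart_dilation (μ x s : ℝ) :
    μ ^ d * parabolicPart k d f (μ * x, μ ^ 2 * s) = μ ^ k * parabolicPart k d f (x, s) := by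
  simp only [parabolicPart, Finset.sum_mul, Finset.mul_sum]
  refine Finset.sum_congr rfl fun j _ => Finset.sum_congr rfl fun i _ => ?_
  unfold parabolicCoeff
  split_ifs with h
  · rw [← h]; ring
  · simp

lemma euler_parabolicPart (x s : ℝ) :
    x * dx (parabolicPart k 0 f) (x, s) + 2 * s * ds (parabolicPart k 0 f) (x, s)
      = k * parabolicPart k 0 f (x, s) := by
  have hhom := parabolicPart_dilation (k := k) (d := 0) (f := f) (x := x) (s := s)
  simp only [pow_zero, one_mul] at hhom
  refine (hasDerivAt_dilation (differentiable_parabolicPart (x, s))).unique ?_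
  simpa [hhom] using (hasDerivAt_pow k (1 : ℝ)).mul_const (parabolicPart k 0 f (x, s))

lemma JetVanishes.parabolicPart_zero (h : JetVanishes k d f) (hdk : d ≤ k) :
    parabolicPart k d f (0, 0) = f (0, 0) := by
  have h0 : jet f 0 0 = f (0, 0) := rfl
  rw [parabolicPart, Finset.sum_range_succ', Finset.sum_range_succ']
  simp only [parabolicCoeff]
  rcases hdk.eq_or_lt with rfl | hlt
  · simp [h0]
  · simp [← h0, h 0 0 (by omega), hlt.ne]

/-- `g = O((|x| + √s) ^ n)` in the parabolic box `|x| ≤ 1`, `0 ≤ s ≤ 1`, with `s` written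
`σ ^ 2`. -/
def IsParabolicBigO (n : ℕ) (g : ℝ × ℝ → ℝ) : Prop :=
  ∃ C, 0 ≤ C ∧ ∀ x σ : ℝ, |x| ≤ 1 → 0 ≤ σ → σ ≤ 1 → |g (x, σ ^ 2)| ≤ C * (|x| + σ) ^ n

lemma isParabolicBigO_zero {g : ℝ × ℝ → ℝ} (hg : Continuous g) : IsParabolicBigO 0 g := by
  obtain ⟨C, hC⟩ := ((isCompact_Icc (a := (-1 : ℝ)) (b := 1)).prod
    (isCompact_Icc (a := (0 : ℝ)) (b := 1))).exists_bound_of_continuousOn hg.continuousOn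
  refine ⟨C, (norm_nonneg _).trans (hC (0, 0) (by simp)), fun x σ hx hσ hσ1 => ?_⟩
  simpa using hC (x, σ ^ 2) ⟨abs_le.1 hx, sq_nonneg σ, pow_le_one₀ hσ hσ1⟩

lemma abs_sub_le_of_hasDerivAt {g g' : ℝ → ℝ} {C x y : ℝ}
    (hg : ∀ z, HasDerivAt g (g' z) z) (hC : ∀ z ∈ uIcc x y, |g' z| ≤ C) :
    |g y - g x| ≤ C * |y - x| :=
  Convex.norm_image_sub_le_of_norm_hasDerivWithin_le (fun z _ => (hg z).hasDerivWithinAt) hC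
    (convex_uIcc x y) left_mem_uIcc right_mem_uIcc

lemma isParabolicBigO_of_partials {g : ℝ × ℝ → ℝ} {n : ℕ} (hg : Differentiable ℝ g)
    (h0 : g (0, 0) = 0) (hx : IsParabolicBigO n (dx g)) (hs : IsParabolicBigO (n - 1) (ds g)) :
    IsParabolicBigO (n + 1) g := by
  obtain ⟨C, hC, hx⟩ := hx
  obtain ⟨D, hD, hs⟩ := hs
  refine ⟨C + D, by positivity, fun x σ hx1 hσ hσ1 => ?_⟩
  have space : |g (x, 0)| ≤ C * (|x| + σ) ^ (n + 1) := by
    have hmv := abs_sub_le_of_hasDerivAt (x := 0) (y := x) (fun z => hasDerivAt_dx (hg (z, 0)))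
      (C := C * |x| ^ n) fun z hz => by
        have hzx : |z| ≤ |x| := by simpa using abs_sub_left_of_mem_uIcc hz
        have := hx z 0 (hzx.trans hx1) le_rfl zero_le_one
        rw [zero_pow two_ne_zero, add_zero] at this
        exact this.trans (by gcongr)
    rw [h0, sub_zero, sub_zero, mul_assoc, ← pow_succ] at hmv
    exact hmv.trans (by gcongr; linarith)
  have time : |g (x, σ ^ 2) - g (x, 0)| ≤ D * (|x| + σ) ^ (n + 1) := by
    have hmv := abs_sub_le_of_hasDerivAt (x := 0) (y := σ ^ 2)
      (fun z => hasDerivAt_ds (hg (x, z))) (C := D * (|x| + σ) ^ (n - 1)) fun z hz => by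
        rw [uIcc_of_le (sq_nonneg σ)] at hz
        have hzσ : √z ≤ σ := (Real.sqrt_le_left hσ).2 hz.2
        have := hs x (√z) hx1 (Real.sqrt_nonneg z) (hzσ.trans hσ1)
        rw [Real.sq_sqrt hz.1] at this
        exact this.trans (by gcongr)
    rw [sub_zero, abs_of_nonneg (sq_nonneg σ), mul_assoc] at hmv
    refine hmv.trans (mul_le_mul_of_nonneg_left ?_ hD)
    rcases n with _ | n
    · simp only [zero_le, Nat.sub_eq_zero_of_le, pow_zero, one_mul, zero_add, pow_one]
      nlinarith [abs_nonneg x]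
    · rw [Nat.add_sub_cancel, add_assoc, pow_add _ n]
      gcongr
      linarith [abs_nonneg x]
  linarith [abs_sub_abs_le_abs_sub (g (x, σ ^ 2)) (g (x, 0))]

lemma dx_sub {g : ℝ × ℝ → ℝ} (hf : Differentiable ℝ f) (hg : Differentiable ℝ g) :
    dx (f - g) = dx f - dx g := by
  funext p
  simp [dx, fderiv_sub (hf p) (hg p)]

lemma ds_sub {g : ℝ × ℝ → ℝ} (hf : Differentiable ℝ f) (hg : Differentiable ℝ g) :
    ds (f - g) = ds f - ds g := by
  funext p
  simp [ds, fderiv_sub (hf p) (hg p)]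

theorem isParabolicBigO_sub_parabolicPart (hf : ContDiff ℝ ∞ f) (h : JetVanishes k d f) :
    IsParabolicBigO (k + 1 - d) (f - parabolicPart k d f) := by
  obtain ⟨n, hn⟩ : ∃ n, n = k + 1 - d := ⟨_, rfl⟩
  rw [← hn]
  induction n using Nat.strong_induction_on generalizing f d with
  | _ n ih =>
    have hdiff : Differentiable ℝ f := hf.differentiable (by simp)
    rcases n with _ | n
    · exact isParabolicBigO_zero (hf.sub contDiff_parabolicPart).continuous
    · refine isParabolicBigO_of_partials (hdiff.sub differentiable_parabolicPart) ?_ ?_ ?_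
      · rw [Pi.sub_apply, h.parabolicPart_zero (by omega), sub_self]
      · rw [dx_sub hdiff differentiable_parabolicPart, dx_parabolicPart hf]
        exact ih n (by omega) (contDiff_dx hf) (h.dx hf) (by omega)
      · rw [ds_sub hdiff differentiable_parabolicPart, ds_parabolicPart]
        exact ih (n - 1) (by omega) (contDiff_ds hf) h.ds (by omega)

end ParabolicTaylor

section BlowUp

variable {f u : ℝ × ℝ → ℝ} {k d : ℕ} {C δ : ℝ}

lemma tendstoUniformlyOn_of_abs_sub_le {ι α : Type*} {l : Filter ι} {F : ι → α → ℝ} {f : α → ℝ}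
    {e : ι → ℝ} {s : Set α} (he : Tendsto e l (𝓝 0))
    (h : ∀ᶠ n in l, ∀ x ∈ s, |F n x - f x| ≤ e n) : TendstoUniformlyOn F f l s := by
  rw [Metric.tendstoUniformlyOn_iff]
  intro a ha
  filter_upwards [h, he.eventually (gt_mem_nhds ha)] with n hn hlt x hx
  rw [dist_comm, Real.dist_eq]
  exact (hn x hx).trans_lt hlt

lemma tendsto_id_nhdsGT_zero : Tendsto (fun ε : ℝ => ε) (𝓝[>] 0) (𝓝 0) :=
  tendsto_id.mono_left nhdsWithin_le_nhds

lemma eventually_abs_mul_le (A : ℝ) {c : ℝ} (hc : 0 < c) :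
    ∀ᶠ ε in 𝓝[>] (0 : ℝ), 0 < ε ∧ ε ≤ c ∧ ∀ r ∈ Icc (-A) A, |ε * r| ≤ c := by
  have hsmall : 0 < c / (|A| + 1) := by positivity
  filter_upwards [Ioo_mem_nhdsGT hsmall] with ε ⟨hε, hεc⟩
  rw [lt_div_iff₀ (by positivity)] at hεc
  refine ⟨hε, by nlinarith [abs_nonneg A], fun r hr => ?_⟩
  rw [abs_mul, abs_of_pos hε]
  nlinarith [(abs_le.2 hr).trans (le_abs_self A)]

theorem tendstoUniformlyOn_blowup (hf : ContDiff ℝ ∞ f) (h : JetVanishes k d f) (A : ℝ) :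
    TendstoUniformlyOn (fun ε r => ε ^ (-(k : ℤ)) * (ε ^ d * f (ε * r, ε ^ 2)))
      (fun r => parabolicPart k d f (r, 1)) (𝓝[>] 0) (Icc (-A) A) := by
  obtain ⟨C, hC, hTaylor⟩ := isParabolicBigO_sub_parabolicPart hf h
  have hlim : Tendsto (fun ε : ℝ => C * (|A| + 1) ^ (k + 1 - d) * ε) (𝓝[>] 0) (𝓝 0) := by
    simpa using tendsto_id_nhdsGT_zero.const_mul (C * (|A| + 1) ^ (k + 1 - d))
  refine tendstoUniformlyOn_of_abs_sub_le hlim ?_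
  filter_upwards [eventually_abs_mul_le A one_pos] with ε ⟨hε, hε1, hεr⟩ r hr
  have hhom := parabolicPart_dilation (k := k) (d := d) (f := f) ε r 1
  rw [mul_one] at hhom
  have hsplit : ε ^ (-(k : ℤ)) * (ε ^ d * f (ε * r, ε ^ 2)) - parabolicPart k d f (r, 1)
      = ε ^ (-(k : ℤ)) * ε ^ d * (f - parabolicPart k d f) (ε * r, ε ^ 2) := by
    rw [Pi.sub_apply, mul_sub, mul_assoc, mul_assoc, hhom, zpow_neg, zpow_natCast,
      inv_mul_cancel_left₀ (pow_ne_zero k hε.ne')]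
  have hsize : |ε * r| + ε ≤ (|A| + 1) * ε := by
    rw [abs_mul, abs_of_pos hε]
    nlinarith [(abs_le.2 hr).trans (le_abs_self A)]
  have hpow : ε ^ d * ε ^ (k + 1 - d) ≤ ε ^ k * ε := by
    rw [← pow_add, ← pow_succ]
    exact pow_le_pow_of_le_one hε.le hε1 (by omega)
  rw [hsplit, abs_mul, abs_of_pos (by positivity)]
  calc ε ^ (-(k : ℤ)) * ε ^ d * |(f - parabolicPart k d f) (ε * r, ε ^ 2)|
      ≤ ε ^ (-(k : ℤ)) * ε ^ d * (C * ((|A| + 1) * ε) ^ (k + 1 - d)) := by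
        gcongr
        exact (hTaylor _ _ (hεr r hr) hε.le hε1).trans (by gcongr)
    _ = C * (|A| + 1) ^ (k + 1 - d) * (ε ^ (-(k : ℤ)) * (ε ^ d * ε ^ (k + 1 - d))) := by
        rw [mul_pow]; ring
    _ ≤ C * (|A| + 1) ^ (k + 1 - d) * (ε ^ (-(k : ℤ)) * (ε ^ k * ε)) := by gcongr
    _ = C * (|A| + 1) ^ (k + 1 - d) * ε := by
        rw [zpow_neg, zpow_natCast, inv_mul_cancel_left₀ (pow_ne_zero k hε.ne')]

lemma tendsto_blowup (hf : ContDiff ℝ ∞ f) (h : JetVanishes k d f) (r : ℝ) :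
    Tendsto (fun ε => ε ^ (-(k : ℤ)) * (ε ^ d * f (ε * r, ε ^ 2))) (𝓝[>] 0)
      (𝓝 (parabolicPart k d f (r, 1))) :=
  (tendstoUniformlyOn_blowup hf h |r|).tendsto_at (abs_le.1 le_rfl)

/-- `|uₛ + uₓₓ| ≤ C (|u| + |uₓ|)` near the origin, for `s ≥ 0`: the time reversal of a linear
parabolic equation, with lower order terms absorbed in `C`. -/
def BackwardHeatInequality (C δ : ℝ) (u : ℝ × ℝ → ℝ) : Prop :=
  ∀ x s, |x| ≤ δ → 0 ≤ s → s ≤ δ →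
    |ds u (x, s) + dx (dx u) (x, s)| ≤ C * (|u (x, s)| + |dx u (x, s)|)

lemma BackwardHeatInequality.heat_parabolicPart (hu : ContDiff ℝ ∞ u) (hδ : 0 < δ)
    (hC : BackwardHeatInequality C δ u) (h : JetVanishes k 0 u) (r : ℝ) :
    parabolicPart k 2 (ds u) (r, 1) + parabolicPart k 2 (dx (dx u)) (r, 1) = 0 := by
  have lim0 := (tendsto_blowup hu h r).abs
  have lim1 := (tendsto_blowup (contDiff_dx hu) (h.dx hu) r).abs
  have hrhs := ((tendsto_id_nhdsGT_zero.mul tendsto_id_nhdsGT_zero).mul lim0).add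
    (tendsto_id_nhdsGT_zero.mul lim1) |>.const_mul C
  simp only [zero_mul, mul_zero, add_zero] at hrhs
  refine tendsto_nhds_unique ((tendsto_blowup (contDiff_ds hu) h.ds r).add
    (tendsto_blowup (contDiff_dx (contDiff_dx hu)) ((h.dx hu).dx (contDiff_dx hu)) r))
    (squeeze_zero_norm' ?_ hrhs)
  filter_upwards [eventually_abs_mul_le |r| (lt_min one_pos hδ)] with ε ⟨hε, hεc, hεr⟩
  have hineq := hC (ε * r) (ε ^ 2) ((hεr r (abs_le.1 le_rfl)).trans (min_le_right _ _))
    (by positivity) (by nlinarith [hεc.trans (min_le_left _ _), hεc.trans (min_le_right _ _)])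
  have hz : 0 < ε ^ (-(k : ℤ)) := zpow_pos hε _
  rw [Real.norm_eq_abs, ← mul_add, ← mul_add]
  simp only [abs_mul, abs_of_pos hz, abs_pow, abs_of_pos hε, pow_zero, one_mul, zero_add, pow_one]
  calc ε ^ (-(k : ℤ)) * (ε ^ 2 * |ds u (ε * r, ε ^ 2) + dx (dx u) (ε * r, ε ^ 2)|)
      ≤ ε ^ (-(k : ℤ)) * (ε ^ 2 * (C * (|u (ε * r, ε ^ 2)| + |dx u (ε * r, ε ^ 2)|))) := by
        gcongr
    _ = C * (ε * ε * (ε ^ (-(k : ℤ)) * |u (ε * r, ε ^ 2)|)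
          + ε * (ε ^ (-(k : ℤ)) * (ε * |dx u (ε * r, ε ^ 2)|))) := by ring

end BlowUp

section HermitePolynomial

open Polynomial

variable {u : ℝ × ℝ → ℝ} {k : ℕ} {C δ : ℝ}

lemma deriv_eval (p : ℝ[X]) : (deriv fun x => p.eval x) = fun x => p.derivative.eval x :=
  funext fun _ => p.deriv

/-- The polynomial `p` solves the Hermite equation `p'' - (1/2) r p' + (k/2) p = 0`. -/
def IsHermite (k : ℕ) (p : ℝ[X]) : Prop :=
  ∀ r : ℝ, deriv (deriv fun x => p.eval x) r - (1 / 2) * r * deriv (fun x => p.eval x) r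
    + ((k : ℝ) / 2) * p.eval r = 0

lemma IsHermite.natDegree_eq {p : ℝ[X]} (h : IsHermite k p) (hp : p ≠ 0) : p.natDegree = k := by
  have hpoly : p.derivative.derivative - Polynomial.C (1 / 2) * (p.derivative * X)
      + Polynomial.C ((k : ℝ) / 2) * p = 0 := Polynomial.funext fun r => by
    simpa [deriv_eval, mul_comm, mul_left_comm, mul_assoc] using h r
  have hcoeff := congrArg (coeff · p.natDegree) hpoly
  have hmid : (p.derivative * X).coeff p.natDegree = p.natDegree * p.leadingCoeff := by
    rcases hn : p.natDegree with _ | n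
    · simp
    · rw [coeff_mul_X, coeff_derivative, leadingCoeff, hn]
      push_cast
      ring
  have htop : p.derivative.derivative.coeff p.natDegree = 0 := by
    simp [coeff_derivative, coeff_eq_zero_of_natDegree_lt]
  simp only [coeff_add, coeff_sub, coeff_C_mul, hmid, htop, coeff_zero, coeff_natDegree] at hcoeff
  have hprod : ((p.natDegree : ℝ) - k) * p.leadingCoeff = 0 := by linarith
  exact_mod_cast sub_eq_zero.1
    ((mul_eq_zero.1 hprod).resolve_right (leadingCoeff_ne_zero.2 hp))

/-- The polynomial `r ↦ parabolicPart k 0 u (r, 1)`, the candidate blow-up limit of `u`. -/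
noncomputable def blowupPolynomial (k : ℕ) (u : ℝ × ℝ → ℝ) : ℝ[X] :=
  ∑ j ∈ Finset.range (k + 1), ∑ i ∈ Finset.range (k + 1),
    monomial i (parabolicCoeff k 0 u i j / i ! / j !)

lemma eval_blowupPolynomial (r : ℝ) :
    (blowupPolynomial k u).eval r = parabolicPart k 0 u (r, 1) := by
  simp only [blowupPolynomial, parabolicPart, eval_finsetSum, eval_monomial, Finset.sum_mul]
  refine Finset.sum_congr rfl fun j _ => Finset.sum_congr rfl fun i _ => ?_
  ring

lemma eval_derivative_blowupPolynomial (hu : ContDiff ℝ ∞ u) (r : ℝ) :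
    (blowupPolynomial k u).derivative.eval r = parabolicPart k 1 (dx u) (r, 1) := by
  refine ((blowupPolynomial k u).hasDerivAt r).unique ?_
  simp only [eval_blowupPolynomial]
  exact (hasDerivAt_dx (differentiable_parabolicPart _)).congr_deriv
    (by rw [dx_parabolicPart hu])

lemma eval_derivative_derivative_blowupPolynomial (hu : ContDiff ℝ ∞ u) (r : ℝ) :
    (blowupPolynomial k u).derivative.derivative.eval r
      = parabolicPart k 2 (dx (dx u)) (r, 1) := by
  refine ((blowupPolynomial k u).derivative.hasDerivAt r).unique ?_
  simp only [eval_derivative_blowupPolynomial hu]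
  exact (hasDerivAt_dx (differentiable_parabolicPart _)).congr_deriv
    (by rw [dx_parabolicPart (contDiff_dx hu)])

lemma coeff_blowupPolynomial {i j : ℕ} (hij : i + 2 * j = k) :
    (blowupPolynomial k u).coeff i = jet u i j / i ! / j ! := by
  simp only [blowupPolynomial, finsetSum_coeff, coeff_monomial]
  have hi : i ∈ Finset.range (k + 1) := Finset.mem_range.2 (by omega)
  have hj : j ∈ Finset.range (k + 1) := Finset.mem_range.2 (by omega)
  rw [Finset.sum_eq_single_of_mem j hj, Finset.sum_eq_single_of_mem i hi]
  · simp [parabolicCoeff, hij]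
  · intro l _ hl
    simp [hl]
  · intro l _ hl
    refine Finset.sum_eq_zero fun i' _ => ?_
    split_ifs with h
    · simp [parabolicCoeff, h, show i + 2 * l ≠ k by omega]
    · rfl

lemma BackwardHeatInequality.isHermite_blowupPolynomial (hu : ContDiff ℝ ∞ u) (hδ : 0 < δ)
    (hC : BackwardHeatInequality C δ u) (h : JetVanishes k 0 u) :
    IsHermite k (blowupPolynomial k u) := by
  intro r
  have heuler := euler_parabolicPart (k := k) (f := u) r 1
  have hheat := hC.heat_parabolicPart hu hδ h r
  rw [dx_parabolicPart hu, ds_parabolicPart] at heuler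
  rw [deriv_eval, deriv_eval]
  simp only [eval_blowupPolynomial, eval_derivative_blowupPolynomial hu,
    eval_derivative_derivative_blowupPolynomial hu]
  simp only [zero_add] at heuler
  linarith

lemma blowupPolynomial_ne_zero {i j : ℕ} (hij : i + 2 * j = k) (hne : jet u i j ≠ 0) :
    blowupPolynomial k u ≠ 0 := by
  intro h0
  have hcoeff := coeff_blowupPolynomial (u := u) hij
  rw [h0, coeff_zero, eq_comm, div_div, div_eq_zero_iff] at hcoeff
  exact hcoeff.elim hne (by positivity)

lemma IsHermite.jet_ne_zero (h : IsHermite k (blowupPolynomial k u))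
    (h0 : blowupPolynomial k u ≠ 0) : jet u k 0 ≠ 0 := by
  intro hjet
  have hcoeff := coeff_blowupPolynomial (k := k) (u := u) (j := 0) (add_zero k)
  rw [hjet, zero_div, zero_div] at hcoeff
  exact h0 (leadingCoeff_eq_zero.1 (by rw [leadingCoeff, h.natDegree_eq h0, hcoeff]))

lemma exists_jetVanishes (hne : ∃ i j, jet u i j ≠ 0) :
    ∃ k, JetVanishes k 0 u ∧ ∃ i j, i + 2 * j = k ∧ jet u i j ≠ 0 := by
  classical
  have hex : ∃ k i j, i + 2 * j = k ∧ jet u i j ≠ 0 :=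
    let ⟨i, j, h⟩ := hne; ⟨_, i, j, rfl, h⟩
  refine ⟨Nat.find hex, fun i j hij => ?_, Nat.find_spec hex⟩
  by_contra h
  exact Nat.find_min hex hij ⟨i, j, rfl, h⟩

/-- Convergence of `F ε` to `g` as `ε → 0⁺`, uniformly on compact sets together with the first two
derivatives. -/
def TendstoC2OnCompacts (F : ℝ → ℝ → ℝ) (g : ℝ → ℝ) : Prop :=
  ∀ A : ℝ, 0 < A →
    TendstoUniformlyOn F g (𝓝[>] 0) (Icc (-A) A) ∧
    TendstoUniformlyOn (fun ε => deriv (F ε)) (deriv g) (𝓝[>] 0) (Icc (-A) A) ∧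
    TendstoUniformlyOn (fun ε => deriv (deriv (F ε))) (deriv (deriv g)) (𝓝[>] 0) (Icc (-A) A)

lemma TendstoC2OnCompacts.congr {F G : ℝ → ℝ → ℝ} {g : ℝ → ℝ} (hF : TendstoC2OnCompacts F g)
    (h : ∀ A, ∀ᶠ ε in 𝓝[>] (0 : ℝ), EqOn (F ε) (G ε) (Ioo (-A) A)) : TendstoC2OnCompacts G g := by
  intro A hA
  obtain ⟨h0, h1, h2⟩ := hF A hA
  have hsub : Icc (-A) A ⊆ Ioo (-(A + 1)) (A + 1) := fun x hx =>
    ⟨by linarith [hx.1], by linarith [hx.2]⟩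
  refine ⟨h0.congr ?_, h1.congr ?_, h2.congr ?_⟩ <;> filter_upwards [h (A + 1)] with ε hε
  · exact hε.mono hsub
  · exact (hε.deriv isOpen_Ioo).mono hsub
  · exact ((hε.deriv isOpen_Ioo).deriv isOpen_Ioo).mono hsub

lemma deriv_parabolic_rescaling (hu : Differentiable ℝ u) (c ε : ℝ) :
    deriv (fun r => c * u (ε * r, ε ^ 2)) = fun r => c * (ε * dx u (ε * r, ε ^ 2)) := by
  funext r
  have hlin : HasDerivAt (fun r : ℝ => ε * r) ε r := by simpa using (hasDerivAt_id r).const_mul ε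
  exact ((((hasDerivAt_dx (hu (ε * r, ε ^ 2))).comp r hlin).const_mul c).congr_deriv
    (by rw [mul_comm (dx u _) ε])).deriv

theorem tendstoC2OnCompacts_blowupPolynomial (hu : ContDiff ℝ ∞ u) (h : JetVanishes k 0 u) :
    TendstoC2OnCompacts (fun ε r => ε ^ (-(k : ℤ)) * u (ε * r, ε ^ 2))
      (fun x => (blowupPolynomial k u).eval x) := by
  intro A _
  have hdx := contDiff_dx hu
  simp only [deriv_eval, deriv_parabolic_rescaling (hu.differentiable (by simp)), ← mul_assoc,
    deriv_parabolic_rescaling (hdx.differentiable (by simp))]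
  simp only [eval_blowupPolynomial, eval_derivative_blowupPolynomial hu,
    eval_derivative_derivative_blowupPolynomial hu]
  refine ⟨?_, ?_, ?_⟩
  · simpa using tendstoUniformlyOn_blowup hu h A
  · simpa [mul_assoc] using tendstoUniformlyOn_blowup hdx (h.dx hu) A
  · simpa [mul_assoc, pow_two] using
      tendstoUniformlyOn_blowup (contDiff_dx hdx) ((h.dx hu).dx hdx) A

theorem BackwardHeatInequality.exists_hermite_blowup (hu : ContDiff ℝ ∞ u) (hδ : 0 < δ)
    (hC : BackwardHeatInequality C δ u) (hne : ∃ i j, jet u i j ≠ 0) :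
    ∃ (k : ℕ) (p : ℝ[X]), p ≠ 0 ∧ IsHermite k p ∧ jet u k 0 ≠ 0 ∧
      TendstoC2OnCompacts (fun ε r => ε ^ (-(k : ℤ)) * u (ε * r, ε ^ 2)) (fun x => p.eval x) := by
  obtain ⟨k, hvan, i, j, hij, hjet⟩ := exists_jetVanishes hne
  have hH := hC.isHermite_blowupPolynomial hu hδ hvan
  have h0 := blowupPolynomial_ne_zero hij hjet
  exact ⟨k, _, h0, hH, hH.jet_ne_zero h0, tendstoC2OnCompacts_blowupPolynomial hu hvan⟩

end HermitePolynomial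

section WeightedInner

variable {a b : ℝ} {w f g h : ℝ → ℝ}

/-- The weighted `L²` inner product `∫ f g w` over `[a, b]`. It carries the Gaussian weight in the
frequency argument and the weight `rⁿ` in the energy argument. -/
noncomputable def weightedInner (w : ℝ → ℝ) (a b : ℝ) (f g : ℝ → ℝ) : ℝ :=
  ∫ x in a..b, f x * g x * w x

lemma weightedInner_comm (w f g : ℝ → ℝ) : weightedInner w a b f g = weightedInner w a b g f := by
  simp only [weightedInner, mul_comm (f _)]

lemma weightedInner_mono (hab : a ≤ b) (hw : ContinuousOn w (Icc a b))
    (hw0 : ∀ x ∈ Icc a b, 0 ≤ w x)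
    {k : ℝ → ℝ} (hf : ContinuousOn f (Icc a b)) (hg : ContinuousOn g (Icc a b))
    (hh : ContinuousOn h (Icc a b)) (hk : ContinuousOn k (Icc a b))
    (hle : ∀ x ∈ Icc a b, f x * g x ≤ h x * k x) :
    weightedInner w a b f g ≤ weightedInner w a b h k :=
  intervalIntegral.integral_mono_on hab (((hf.mul hg).mul hw).intervalIntegrable_of_Icc hab)
    (((hh.mul hk).mul hw).intervalIntegrable_of_Icc hab)
    fun x hx => mul_le_mul_of_nonneg_right (hle x hx) (hw0 x hx)

lemma weightedInner_self_nonneg (hab : a ≤ b) (hw0 : ∀ x ∈ Icc a b, 0 ≤ w x) :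
    0 ≤ weightedInner w a b f f :=
  intervalIntegral.integral_nonneg hab fun x hx => mul_nonneg (mul_self_nonneg _) (hw0 x hx)

lemma weightedInner_add_mul_left (hab : a ≤ b) (hw : ContinuousOn w (Icc a b))
    (hf : ContinuousOn f (Icc a b)) (hg : ContinuousOn g (Icc a b))
    (hh : ContinuousOn h (Icc a b)) (c : ℝ) :
    weightedInner w a b (fun x => f x + c * g x) h =
      weightedInner w a b f h + c * weightedInner w a b g h := by
  simp only [weightedInner]
  rw [← intervalIntegral.integral_const_mul, ← intervalIntegral.integral_add]
  · exact intervalIntegral.integral_congr fun x _ => by ring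
  · exact ((hf.mul hh).mul hw).intervalIntegrable_of_Icc hab
  · exact (((hg.mul hh).mul hw).intervalIntegrable_of_Icc hab).const_mul c

lemma weightedInner_add_mul_self (hab : a ≤ b) (hw : ContinuousOn w (Icc a b))
    (hf : ContinuousOn f (Icc a b)) (hg : ContinuousOn g (Icc a b)) (c : ℝ) :
    weightedInner w a b (fun x => f x + c * g x) (fun x => f x + c * g x) =
      weightedInner w a b f f + 2 * c * weightedInner w a b f g
        + c ^ 2 * weightedInner w a b g g := by
  have hfg : ContinuousOn (fun x => f x + c * g x) (Icc a b) := by fun_prop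
  rw [weightedInner_add_mul_left hab hw hf hg hfg, weightedInner_comm w f,
    weightedInner_comm w g, weightedInner_add_mul_left hab hw hf hg hf,
    weightedInner_add_mul_left hab hw hf hg hg, weightedInner_comm w g f]
  ring

lemma weightedInner_sq_le (hab : a ≤ b) (hw : ContinuousOn w (Icc a b))
    (hw0 : ∀ x ∈ Icc a b, 0 ≤ w x)
    (hf : ContinuousOn f (Icc a b)) (hg : ContinuousOn g (Icc a b)) :
    weightedInner w a b f g ^ 2 ≤ weightedInner w a b f f * weightedInner w a b g g := by
  have hquad (c : ℝ) : 0 ≤ weightedInner w a b g g * (c * c)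
      + 2 * weightedInner w a b f g * c + weightedInner w a b f f := by
    have := weightedInner_self_nonneg (f := fun x => f x + c * g x) hab hw0
    rw [weightedInner_add_mul_self hab hw hf hg] at this
    linarith
  have := discrim_le_zero hquad
  rw [discrim] at this
  linarith

lemma two_mul_abs_weightedInner_le (hab : a ≤ b) (hw : ContinuousOn w (Icc a b))
    (hw0 : ∀ x ∈ Icc a b, 0 ≤ w x) (hf : ContinuousOn f (Icc a b)) (hg : ContinuousOn g (Icc a b)) :
    2 * |weightedInner w a b f g| ≤ weightedInner w a b f f + weightedInner w a b g g := by
  have hexpand (c : ℝ) := weightedInner_add_mul_self hab hw hf hg c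
  have hnonneg (c : ℝ) := weightedInner_self_nonneg (f := fun x => f x + c * g x) hab hw0
  have hadd := (hnonneg 1).trans_eq (hexpand 1)
  have hsub := (hnonneg (-1)).trans_eq (hexpand (-1))
  have : |weightedInner w a b f g| ≤
      (weightedInner w a b f f + weightedInner w a b g g) / 2 :=
    abs_le.2 ⟨by linarith, by linarith⟩
  linarith

lemma weightedInner_sub_right (hab : a ≤ b) (hw : ContinuousOn w (Icc a b))
    (hf : ContinuousOn f (Icc a b)) (hg : ContinuousOn g (Icc a b))
    (hh : ContinuousOn h (Icc a b)) :
    weightedInner w a b h (fun x => f x - g x) =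
      weightedInner w a b h f - weightedInner w a b h g := by
  simpa [weightedInner_comm w h, sub_eq_add_neg] using
    weightedInner_add_mul_left hab hw hf hg hh (-1)

lemma weightedInner_self_sub (hab : a ≤ b) (hw : ContinuousOn w (Icc a b))
    (hf : ContinuousOn f (Icc a b)) (hg : ContinuousOn g (Icc a b)) :
    weightedInner w a b f (fun x => f x - g x) + weightedInner w a b g g / 4 =
      weightedInner w a b (fun x => f x + -(1 / 2) * g x) (fun x => f x + -(1 / 2) * g x) := by
  rw [weightedInner_add_mul_self hab hw hf hg, weightedInner_sub_right hab hw hf hg hf]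
  ring

-- Cauchy–Schwarz for `u` and `z - f / 2`; this choice completes the square on both sides.
lemma weightedInner_mul_le (hab : a ≤ b) (hw : ContinuousOn w (Icc a b))
    (hw0 : ∀ x ∈ Icc a b, 0 ≤ w x) {u z : ℝ → ℝ} (hu : ContinuousOn u (Icc a b))
    (hz : ContinuousOn z (Icc a b)) (hf : ContinuousOn f (Icc a b)) :
    weightedInner w a b u z * weightedInner w a b u (fun x => z x - f x) ≤
      weightedInner w a b u u * (weightedInner w a b z (fun x => z x - f x)
        + weightedInner w a b f f / 4) := by
  have hcs := weightedInner_sq_le (g := fun x => z x + -(1 / 2) * f x) hab hw hw0 hu (by fun_prop)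
  rw [weightedInner_comm w u, weightedInner_add_mul_left hab hw hz hf hu, weightedInner_comm w z u,
    weightedInner_comm w f u] at hcs
  rw [weightedInner_self_sub hab hw hz hf, weightedInner_sub_right hab hw hz hf hu]
  linarith [sq_nonneg (weightedInner w a b u f)]

end WeightedInner

section ParametricIntegral

open MeasureTheory Function

variable {a b c d t : ℝ} {f f' : ℝ → ℝ → ℝ}

lemma continuousOn_slice (hf : ContinuousOn (uncurry f) (Icc a b ×ˢ Ioo c d)) (ht : t ∈ Ioo c d) :
    ContinuousOn (fun x => f x t) (Icc a b) :=
  hf.comp (f := fun x => (x, t)) (by fun_prop) fun _ hx => ⟨hx, ht⟩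

lemma ae_uIoc_of_Ioo {p : ℝ → Prop} (hab : a ≤ b) (h : ∀ x ∈ Ioo a b, p x) :
    ∀ᵐ x, x ∈ uIoc a b → p x := by
  filter_upwards [Measure.ae_ne volume b] with x hxb hx
  rw [uIoc_of_le hab] at hx
  exact h x ⟨hx.1, lt_of_le_of_ne hx.2 hxb⟩

lemma hasDerivAt_intervalIntegral (hab : a ≤ b) (ht : t ∈ Ioo c d)
    (hf : ContinuousOn (uncurry f) (Icc a b ×ˢ Ioo c d))
    (hf' : ContinuousOn (uncurry f') (Icc a b ×ˢ Ioo c d))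
    (hderiv : ∀ x ∈ Ioo a b, ∀ s ∈ Ioo c d, HasDerivAt (f x) (f' x s) s) :
    HasDerivAt (fun s => ∫ x in a..b, f x s) (∫ x in a..b, f' x t) t := by
  obtain ⟨c', hcc', hc't⟩ := exists_between ht.1
  obtain ⟨d', htd', hd'd⟩ := exists_between ht.2
  have hsub : Icc c' d' ⊆ Ioo c d := Icc_subset_Ioo hcc' hd'd
  obtain ⟨M, hM⟩ := (isCompact_Icc.prod isCompact_Icc).exists_bound_of_continuousOn
    (hf'.mono (prod_mono_right hsub))
  have integrable {g : ℝ → ℝ → ℝ} (hg : ContinuousOn (uncurry g) (Icc a b ×ˢ Ioo c d)) {s : ℝ}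
      (hs : s ∈ Ioo c d) : IntervalIntegrable (fun x => g x s) volume a b :=
    (continuousOn_slice hg hs).intervalIntegrable_of_Icc hab
  refine (intervalIntegral.hasDerivAt_integral_of_dominated_loc_of_deriv_le
    (F := fun s x => f x s) (F' := fun s x => f' x s) (bound := fun _ => M)
    (Ioo_mem_nhds hc't htd') ?_ (integrable hf ht)
    (integrable hf' ht).aestronglyMeasurable_restrict_uIoc ?_ intervalIntegrable_const ?_).2
  · filter_upwards [Ioo_mem_nhds ht.1 ht.2] with s hs
    exact (integrable hf hs).aestronglyMeasurable_restrict_uIoc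
  · exact ae_uIoc_of_Ioo hab fun x hx s hs =>
      hM (x, s) ⟨Ioo_subset_Icc_self hx, Ioo_subset_Icc_self hs⟩
  · exact ae_uIoc_of_Ioo hab fun x hx s hs => hderiv x hx s (hsub (Ioo_subset_Icc_self hs))

end ParametricIntegral

section DifferentialInequalities

variable {H D H' D' : ℝ → ℝ} {K a b : ℝ}

lemma le_mul_exp_of_deriv_le (hab : a ≤ b) (hH : ∀ t ∈ Icc a b, HasDerivAt H (H' t) t)
    (hle : ∀ t ∈ Icc a b, H' t ≤ K * H t) : H b ≤ H a * Real.exp (K * (b - a)) := by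
  have := le_gronwallBound_of_liminf_deriv_right_le (f := H) (f' := H') (δ := H a) (K := K)
    (ε := 0) (fun t ht => (hH t ht).continuousAt.continuousWithinAt)
    (fun t ht r hr => (hH t (Ico_subset_Icc_self ht)).hasDerivWithinAt.liminf_right_slope_le hr)
    le_rfl (fun t ht => by simpa using hle t (Ico_subset_Icc_self ht)) b ⟨hab, le_rfl⟩
  rwa [gronwallBound_ε0] at this

lemma mul_exp_le_of_le_deriv (hab : a ≤ b) (hH : ∀ t ∈ Icc a b, HasDerivAt H (H' t) t)
    (hle : ∀ t ∈ Icc a b, K * H t ≤ H' t) : H a * Real.exp (K * (b - a)) ≤ H b := by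
  have := le_mul_exp_of_deriv_le (H := fun t => -H t) (H' := fun t => -H' t) (K := K) hab
    (fun t ht => (hH t ht).fun_neg) fun t ht => by linarith [hle t ht]
  linarith

lemma mul_pow_le_of_mul_deriv_le {n : ℕ} {s₁ : ℝ} (hs₁ : 0 < s₁) (hpos : 0 < H s₁)
    (hH : ∀ s ∈ Ioc 0 s₁, HasDerivAt H (H' s) s)
    (hle : ∀ s ∈ Ioc 0 s₁, s * H' s ≤ n * H s) :
    ∃ c, 0 < c ∧ ∀ s ∈ Ioc 0 s₁, c * s ^ n ≤ H s := by
  have hquot (s : ℝ) (hs : s ∈ Ioc 0 s₁) : HasDerivAt (fun s => H s / s ^ n)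
      ((H' s * s ^ n - H s * (n * s ^ (n - 1))) / (s ^ n) ^ 2) s :=
    (hH s hs).fun_div (hasDerivAt_pow n s) (pow_pos hs.1 n).ne'
  have hanti : AntitoneOn (fun s => H s / s ^ n) (Ioc 0 s₁) := by
    refine antitoneOn_of_deriv_nonpos (convex_Ioc 0 s₁)
      (fun s hs => (hquot s hs).continuousAt.continuousWithinAt)
      (fun s hs => (hquot s (interior_subset hs)).differentiableAt.differentiableWithinAt)
      fun s hs => ?_
    have hs := interior_subset hs
    rw [(hquot s hs).deriv]
    refine div_nonpos_of_nonpos_of_nonneg ?_ (sq_nonneg _)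
    refine nonpos_of_mul_nonpos_right ?_ hs.1
    rcases n with - | n
    · simpa using hle s hs
    · have := mul_le_mul_of_nonneg_right (hle s hs) (pow_nonneg hs.1.le (n + 1))
      rw [Nat.add_sub_cancel]
      linear_combination this
  refine ⟨H s₁ / s₁ ^ n, by positivity, fun s hs => ?_⟩
  rw [← le_div_iff₀ (pow_pos hs.1 n)]
  exact hanti hs ⟨hs₁, le_rfl⟩ hs.2

lemma exists_frequency_le {s₁ : ℝ} (hs₁ : 0 < s₁) (hK : 0 ≤ K)
    (hpos : ∀ s ∈ Ioc 0 s₁, 0 < H s) (hD0 : ∀ s ∈ Ioc 0 s₁, 0 ≤ D s)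
    (hH : ∀ s ∈ Ioc 0 s₁, HasDerivAt H (H' s) s) (hD : ∀ s ∈ Ioc 0 s₁, HasDerivAt D (D' s) s)
    (hfreq : ∀ s ∈ Ioc 0 s₁,
      -(K * H s * (H s + s * D s)) ≤ s * (D' s * H s - D s * H' s) + D s * H s) :
    ∃ M, ∀ s ∈ Ioc 0 s₁, s * D s ≤ M * H s := by
  set N : ℝ → ℝ := fun s => 1 + s * D s / H s
  have hN (s : ℝ) (hs : s ∈ Ioc 0 s₁) : HasDerivAt N
      (((1 * D s + s * D' s) * H s - s * D s * H' s) / H s ^ 2) s :=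
    ((((hasDerivAt_id s).mul (hD s hs)).fun_div (hH s hs) (hpos s hs).ne').const_add 1)
  have hN0 : 0 ≤ N s₁ := by
    have := hD0 s₁ ⟨hs₁, le_rfl⟩
    have := hpos s₁ ⟨hs₁, le_rfl⟩
    positivity
  refine ⟨N s₁ * Real.exp (K * s₁), fun s hs => ?_⟩
  have hsub : Icc s s₁ ⊆ Ioc 0 s₁ := fun x hx => ⟨hs.1.trans_le hx.1, hx.2⟩
  have hgron := mul_exp_le_of_le_deriv (K := -K) hs.2 (fun x hx => hN x (hsub hx)) fun x hx => by
    have hx := hsub hx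
    have := hpos x hx
    have hNx : N x * H x = H x + x * D x := by simp only [N]; field_simp
    rw [le_div_iff₀ (by positivity)]
    calc -K * N x * H x ^ 2 = -(K * H x * (N x * H x)) := by ring
      _ ≤ _ := by rw [hNx]; linarith [hfreq x hx]
  have hsN : N s ≤ N s₁ * Real.exp (K * s₁) := by
    calc N s = N s * Real.exp (-K * (s₁ - s)) * Real.exp (K * (s₁ - s)) := by
          rw [mul_assoc, ← Real.exp_add]; simp
      _ ≤ N s₁ * Real.exp (K * s₁) := by
          gcongr
          linarith [hs.1]
  rw [← div_le_iff₀ (hpos s hs)]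
  exact le_trans (by simp [N]) hsN

lemma exists_mul_pow_le {s₁ : ℝ} (hs₁ : 0 < s₁) (hK : 0 ≤ K)
    (hpos : ∀ s ∈ Ioc 0 s₁, 0 < H s) (hD0 : ∀ s ∈ Ioc 0 s₁, 0 ≤ D s)
    (hH : ∀ s ∈ Ioc 0 s₁, HasDerivAt H (H' s) s) (hD : ∀ s ∈ Ioc 0 s₁, HasDerivAt D (D' s) s)
    (hgrowth : ∀ s ∈ Ioc 0 s₁, s * H' s ≤ K * (H s + s * D s))
    (hfreq : ∀ s ∈ Ioc 0 s₁,
      -(K * H s * (H s + s * D s)) ≤ s * (D' s * H s - D s * H' s) + D s * H s) :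
    ∃ c n, 0 < c ∧ ∀ s ∈ Ioc 0 s₁, c * s ^ (n : ℕ) ≤ H s := by
  obtain ⟨M, hDM⟩ := exists_frequency_le hs₁ hK hpos hD0 hH hD hfreq
  obtain ⟨n, hn⟩ := exists_nat_ge (K * (1 + M))
  obtain ⟨c, hc, hcH⟩ := mul_pow_le_of_mul_deriv_le (n := n) hs₁ (hpos s₁ ⟨hs₁, le_rfl⟩) hH
    fun s hs => by
      have := hpos s hs
      calc s * H' s ≤ K * (H s + s * D s) := hgrowth s hs
        _ ≤ K * (H s + M * H s) := by gcongr K * (H s + ?_); exact hDM s hs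
        _ = K * (1 + M) * H s := by ring
        _ ≤ n * H s := by gcongr
  exact ⟨c, n, hc, hcH⟩

end DifferentialInequalities

section Frequency

variable {u : ℝ × ℝ → ℝ} {C L δ s : ℝ}

/-- The backward Gaussian weight `exp (-x² / 4s)`. -/
noncomputable def gaussianWeight (s x : ℝ) : ℝ := Real.exp (-x ^ 2 / (4 * s))

lemma gaussianWeight_nonneg (s x : ℝ) : 0 ≤ gaussianWeight s x := (Real.exp_pos _).le

lemma gaussianWeight_le_one (hs : 0 ≤ s) (x : ℝ) : gaussianWeight s x ≤ 1 :=
  Real.exp_le_one_iff.2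
    (div_nonpos_of_nonpos_of_nonneg (neg_nonpos.2 (sq_nonneg x)) (by positivity))

lemma gaussianWeight_le_of_abs_le {x y : ℝ} (hs : 0 ≤ s) (hxy : |x| ≤ |y|) :
    gaussianWeight s y ≤ gaussianWeight s x := by
  have := sq_le_sq.2 hxy
  unfold gaussianWeight
  gcongr

@[fun_prop]
lemma continuous_gaussianWeight (s : ℝ) : Continuous (gaussianWeight s) := by
  unfold gaussianWeight
  fun_prop

lemma continuousOn_gaussianWeight :
    ContinuousOn (fun q : ℝ × ℝ => gaussianWeight q.2 q.1) {q | 0 < q.2} := by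
  refine Real.continuous_exp.comp_continuousOn (ContinuousOn.div (by fun_prop) (by fun_prop) ?_)
  intro q (hq : 0 < q.2)
  positivity

lemma hasDerivAt_gaussianWeight_time (x : ℝ) (hs : 0 < s) :
    HasDerivAt (fun s => gaussianWeight s x) (x ^ 2 / (4 * s ^ 2) * gaussianWeight s x) s := by
  refine ((hasDerivAt_const s (-x ^ 2)).fun_div ((hasDerivAt_id s).const_mul 4)
    (by simpa using hs.ne')).exp.congr_deriv ?_
  simp only [gaussianWeight, id]
  field_simp
  ring

lemma hasDerivAt_gaussianWeight_space (x : ℝ) (hs : 0 < s) :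
    HasDerivAt (gaussianWeight s) (-(x / (2 * s)) * gaussianWeight s x) x := by
  refine ((hasDerivAt_pow 2 x).fun_neg.div_const (4 * s)).exp.congr_deriv ?_
  simp only [gaussianWeight]
  field_simp
  ring

/-- The pairing `∫ f(x) g(x) exp (-x² / 4s) dx` over `[-L, L]`. -/
noncomputable def gaussianInner (L s : ℝ) (f g : ℝ → ℝ) : ℝ :=
  weightedInner (gaussianWeight s) (-L) L f g

/-- The height `∫ u(x,s)² exp (-x² / 4s) dx`. Evaluated at `dx u` it is the Dirichlet energy of the
frequency function. -/
noncomputable def gaussianHeight (L : ℝ) (u : ℝ × ℝ → ℝ) (s : ℝ) : ℝ :=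
  gaussianInner L s (fun x => u (x, s)) (fun x => u (x, s))

/-- The derivative `uₛ + (x / 2s) uₓ` along the parabolic dilations. -/
noncomputable def dilationDeriv (u : ℝ × ℝ → ℝ) (s x : ℝ) : ℝ :=
  ds u (x, s) + x / (2 * s) * dx u (x, s)

/-- The result `uₛ + uₓₓ` of applying the backward heat operator. -/
noncomputable def heatResidual (u : ℝ × ℝ → ℝ) (s x : ℝ) : ℝ := ds u (x, s) + dx (dx u) (x, s)

/-- The function `u` is supported in the strip `|x| < L`, so that integrations by parts over
`[-L, L]` have no boundary terms. -/
def SupportedInStrip (L : ℝ) (u : ℝ × ℝ → ℝ) : Prop := tsupport u ⊆ {p | |p.1| < L}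

lemma SupportedInStrip.eq_zero (hL : SupportedInStrip L u) {x : ℝ} (hx : L ≤ |x|) (s : ℝ) :
    u (x, s) = 0 :=
  image_eq_zero_of_notMem_tsupport fun h => (hL h).not_ge hx

lemma SupportedInStrip.dx (hL : SupportedInStrip L u) : SupportedInStrip L (dx u) :=
  (closure_mono (Function.support_subset_iff'.2 fun p hp => by
    have hfd : fderiv ℝ u p = 0 :=
      image_eq_zero_of_notMem_tsupport fun h => hp (tsupport_fderiv_subset ℝ h)
    simp [RescaledLimit.dx, hfd])).trans ((isClosed_tsupport u).closure_eq.trans_subset hL)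

lemma integral_gaussian_divergence (hs : 0 < s) {g g' : ℝ → ℝ} (hg : ∀ x, HasDerivAt g (g' x) x)
    (hg' : Continuous g') (hL : g L = 0) (hL' : g (-L) = 0) :
    ∫ x in -L..L, (g' x - x / (2 * s) * g x) * gaussianWeight s x = 0 := by
  have hgc : Continuous g := continuous_iff_continuousAt.2 fun x => (hg x).continuousAt
  have hderiv (x : ℝ) : HasDerivAt (fun x => g x * gaussianWeight s x)
      ((g' x - x / (2 * s) * g x) * gaussianWeight s x) x :=
    ((hg x).mul (hasDerivAt_gaussianWeight_space x hs)).congr_deriv (by ring)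
  rw [intervalIntegral.integral_eq_sub_of_hasDerivAt (fun x _ => hderiv x)
    (Continuous.intervalIntegrable (by fun_prop) _ _)]
  simp [hL, hL']

lemma continuous_slice (hu : ContDiff ℝ ∞ u) (s : ℝ) : Continuous fun x => u (x, s) :=
  hu.continuous.comp (by fun_prop)

lemma continuous_dilationDeriv (hu : ContDiff ℝ ∞ u) (s : ℝ) : Continuous (dilationDeriv u s) := by
  have := continuous_slice (contDiff_ds hu) s
  have := continuous_slice (contDiff_dx hu) s
  unfold dilationDeriv
  fun_prop

lemma continuous_heatResidual (hu : ContDiff ℝ ∞ u) (s : ℝ) : Continuous (heatResidual u s) :=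
  (continuous_slice (contDiff_ds hu) s).add (continuous_slice (contDiff_dx (contDiff_dx hu)) s)

lemma hasDerivAt_space (hu : ContDiff ℝ ∞ u) (x s : ℝ) :
    HasDerivAt (fun y => u (y, s)) (dx u (x, s)) x :=
  hasDerivAt_dx (hu.differentiable (by simp) _)

lemma hasDerivAt_time (hu : ContDiff ℝ ∞ u) (x s : ℝ) :
    HasDerivAt (fun t => u (x, t)) (ds u (x, s)) s :=
  hasDerivAt_ds (hu.differentiable (by simp) _)

lemma hasDerivAt_gaussianHeight_leibniz (hu : ContDiff ℝ ∞ u) (hL : 0 ≤ L) (hs : 0 < s) :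
    HasDerivAt (gaussianHeight L u) (∫ x in -L..L, (2 * u (x, s) * ds u (x, s)
      + x ^ 2 / (4 * s ^ 2) * u (x, s) ^ 2) * gaussianWeight s x) s := by
  have cu := hu.continuous
  have cus := (contDiff_ds hu).continuous
  have hpos : Icc (-L) L ×ˢ Ioo 0 (s + 1) ⊆ {q : ℝ × ℝ | 0 < q.2} := fun q hq => hq.2.1
  have cG := continuousOn_gaussianWeight.mono hpos
  refine hasDerivAt_intervalIntegral (c := 0) (d := s + 1)
    (f := fun x s => u (x, s) * u (x, s) * gaussianWeight s x)
    (f' := fun x s => (2 * u (x, s) * ds u (x, s)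
      + x ^ 2 / (4 * s ^ 2) * u (x, s) ^ 2) * gaussianWeight s x)
    (by linarith) ⟨hs, by linarith⟩ ?_ ?_ fun x _ t ht => ?_
  · exact ((cu.mul cu).continuousOn).mul cG
  · refine ContinuousOn.mul (ContinuousOn.add (by fun_prop) (ContinuousOn.mul ?_ (by fun_prop))) cG
    refine ContinuousOn.div (by fun_prop) (by fun_prop) fun q hq => ?_
    have : 0 < q.2 := hpos hq
    positivity
  · have hut := hasDerivAt_time hu x t
    exact ((hut.mul hut).mul (hasDerivAt_gaussianWeight_time x ht.1)).congr_deriv (by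
      simp only [Pi.mul_apply]; ring)

lemma hasDerivAt_gaussianHeight (hu : ContDiff ℝ ∞ u) (hL : 0 ≤ L)
    (hsupp : SupportedInStrip L u) (hs : 0 < s) :
    HasDerivAt (gaussianHeight L u)
      (2 * gaussianInner L s (fun x => u (x, s)) (dilationDeriv u s)
        + gaussianHeight L u s / (2 * s)) s := by
  refine (hasDerivAt_gaussianHeight_leibniz hu hL hs).congr_deriv ?_
  have cx := continuous_slice (contDiff_dx hu) s
  have cs := continuous_slice (contDiff_ds hu) s
  have cd := continuous_dilationDeriv hu s
  have hdiv := integral_gaussian_divergence (L := L) (g := fun x => x / (2 * s) * u (x, s) ^ 2) hs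
    (fun x => ((hasDerivAt_id' x).div_const (2 * s)).mul ((hasDerivAt_space hu x s).fun_pow 2))
    (by fun_prop) (by simp [hsupp.eq_zero (le_abs_self L)])
    (by simp [hsupp.eq_zero ((le_abs_self L).trans_eq (abs_neg L).symm)])
  rw [← add_zero (∫ x in -L..L, _), ← hdiv, div_eq_inv_mul (gaussianHeight L u s), gaussianHeight,
    gaussianInner, gaussianInner, weightedInner, weightedInner,
    ← intervalIntegral.integral_const_mul,
    ← intervalIntegral.integral_const_mul, ← intervalIntegral.integral_add,
    ← intervalIntegral.integral_add]
  · refine intervalIntegral.integral_congr fun x _ => ?_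
    simp only [dilationDeriv]
    field_simp
    ring
  all_goals exact Continuous.intervalIntegrable (by fun_prop) _ _

lemma gaussianInner_deriv_dx (hu : ContDiff ℝ ∞ u) (hsupp : SupportedInStrip L u) (hs : 0 < s)
    {g g' : ℝ → ℝ} (hg : ∀ x, HasDerivAt g (g' x) x) (hg' : Continuous g') :
    gaussianInner L s g' (fun x => dx u (x, s)) =
      gaussianInner L s g (fun x => dilationDeriv u s x - heatResidual u s x) := by
  have hgc : Continuous g := continuous_iff_continuousAt.2 fun x => (hg x).continuousAt
  have cx := continuous_slice (contDiff_dx hu) s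
  have cxx := continuous_slice (contDiff_dx (contDiff_dx hu)) s
  have cd := continuous_dilationDeriv hu s
  have cr := continuous_heatResidual hu s
  have hdiv := integral_gaussian_divergence (L := L) hs
    (fun x => (hg x).fun_mul (hasDerivAt_space (contDiff_dx hu) x s)) (by fun_prop)
    (by simp [hsupp.dx.eq_zero (le_abs_self L)])
    (by simp [hsupp.dx.eq_zero ((le_abs_self L).trans_eq (abs_neg L).symm)])
  rw [gaussianInner, gaussianInner, weightedInner, weightedInner, ← sub_eq_zero,
    ← intervalIntegral.integral_sub, ← hdiv]
  · refine intervalIntegral.integral_congr fun x _ => ?_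
    simp only [dilationDeriv, heatResidual]
    ring
  all_goals exact Continuous.intervalIntegrable (by fun_prop) _ _

lemma gaussianHeight_dx (hu : ContDiff ℝ ∞ u) (hsupp : SupportedInStrip L u) (hs : 0 < s) :
    gaussianHeight L (dx u) s = gaussianInner L s (fun x => u (x, s))
      (fun x => dilationDeriv u s x - heatResidual u s x) :=
  gaussianInner_deriv_dx hu hsupp hs (fun x => hasDerivAt_space hu x s)
    (continuous_slice (contDiff_dx hu) s)

lemma hasDerivAt_dilationDeriv (hu : ContDiff ℝ ∞ u) (s x : ℝ) :
    HasDerivAt (dilationDeriv u s) (dilationDeriv (dx u) s x + 1 / (2 * s) * dx u (x, s)) x := by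
  have hmixed : ds (dx u) = dx (ds u) := ds_dx_comm (contDiff_infty.1 hu 2)
  refine ((hasDerivAt_space (contDiff_ds hu) x s).fun_add (((hasDerivAt_id' x).div_const
    (2 * s)).fun_mul (hasDerivAt_space (contDiff_dx hu) x s))).congr_deriv ?_
  rw [dilationDeriv, hmixed]
  ring

lemma hasDerivAt_gaussianHeight_dx (hu : ContDiff ℝ ∞ u) (hL : 0 ≤ L)
    (hsupp : SupportedInStrip L u) (hs : 0 < s) :
    HasDerivAt (gaussianHeight L (dx u))
      (2 * gaussianInner L s (dilationDeriv u s)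
          (fun x => dilationDeriv u s x - heatResidual u s x)
        - gaussianHeight L (dx u) s / (2 * s)) s := by
  have hux := contDiff_dx hu
  have cx := continuous_slice hux s
  have cdx := continuous_dilationDeriv hux s
  refine (hasDerivAt_gaussianHeight hux hL hsupp.dx hs).congr_deriv ?_
  rw [← gaussianInner_deriv_dx hu hsupp hs (hasDerivAt_dilationDeriv hu s) (by fun_prop),
    gaussianInner, gaussianInner, weightedInner_add_mul_left (by linarith) (by fun_prop)
      cdx.continuousOn cx.continuousOn cx.continuousOn,
    weightedInner_comm _ (dilationDeriv (dx u) s), ← gaussianInner, ← gaussianInner,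
    ← gaussianHeight]
  field_simp
  ring

/-- The Gaussian mass `∫ F² exp (-x² / 4s) dx` of the heat residual `F`. -/
noncomputable def residualMass (L : ℝ) (u : ℝ × ℝ → ℝ) (s : ℝ) : ℝ :=
  gaussianInner L s (heatResidual u s) (heatResidual u s)

lemma two_mul_gaussianInner_dilationDeriv_le (hu : ContDiff ℝ ∞ u) (hL : 0 ≤ L)
    (hsupp : SupportedInStrip L u) (hs : 0 < s) :
    2 * gaussianInner L s (fun x => u (x, s)) (dilationDeriv u s) ≤
      2 * gaussianHeight L (dx u) s + gaussianHeight L u s + residualMass L u s := by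
  have c := continuous_slice hu s
  have cd := continuous_dilationDeriv hu s
  have cr := continuous_heatResidual hu s
  have hsub := weightedInner_add_mul_left (w := gaussianWeight s) (a := -L) (b := L)
    (by linarith) (by fun_prop) cd.continuousOn cr.continuousOn c.continuousOn (-1)
  have hcs := two_mul_abs_weightedInner_le (w := gaussianWeight s) (a := -L) (b := L)
    (by linarith) (by fun_prop) (fun x _ => gaussianWeight_nonneg s x) c.continuousOn
    cr.continuousOn
  have hD := gaussianHeight_dx hu hsupp hs
  simp only [neg_one_mul, ← sub_eq_add_neg] at hsub
  rw [gaussianInner, weightedInner_comm, hsub, weightedInner_comm _ (dilationDeriv u s),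
    weightedInner_comm _ (heatResidual u s)] at hD
  have := le_abs_self (weightedInner (gaussianWeight s) (-L) L (fun x => u (x, s))
    (heatResidual u s))
  simp only [residualMass, gaussianHeight, gaussianInner] at hD ⊢
  linarith

lemma gaussianInner_mul_gaussianHeight_dx_le (hu : ContDiff ℝ ∞ u) (hL : 0 ≤ L)
    (hsupp : SupportedInStrip L u) (hs : 0 < s) :
    gaussianInner L s (fun x => u (x, s)) (dilationDeriv u s) * gaussianHeight L (dx u) s ≤
      gaussianHeight L u s * (gaussianInner L s (dilationDeriv u s)
        (fun x => dilationDeriv u s x - heatResidual u s x) + residualMass L u s / 4) := by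
  rw [gaussianHeight_dx hu hsupp hs]
  exact weightedInner_mul_le (by linarith) (by fun_prop) (fun x _ => gaussianWeight_nonneg s x)
    (continuous_slice hu s).continuousOn (continuous_dilationDeriv hu s).continuousOn
    (continuous_heatResidual hu s).continuousOn

lemma BackwardHeatInequality.heatResidual_sq_le (hC : BackwardHeatInequality C δ u) {x : ℝ}
    (hx : |x| ≤ δ) (hs : 0 ≤ s) (hsδ : s ≤ δ) :
    heatResidual u s x ^ 2 ≤ 2 * C ^ 2 * (u (x, s) ^ 2 + dx u (x, s) ^ 2) := by
  calc heatResidual u s x ^ 2 ≤ (C * (|u (x, s)| + |dx u (x, s)|)) ^ 2 :=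
        sq_le_sq.2 ((hC x s hx hs hsδ).trans (le_abs_self _))
    _ = C ^ 2 * (|u (x, s)| + |dx u (x, s)|) ^ 2 := by ring
    _ ≤ C ^ 2 * (2 * (|u (x, s)| ^ 2 + |dx u (x, s)| ^ 2)) := by gcongr; exact add_sq_le
    _ = _ := by simp only [sq_abs]; ring

lemma BackwardHeatInequality.heatResidual_sq_mul_gaussianWeight_le
    (hC : BackwardHeatInequality C δ u) (hs : s ∈ Ioc 0 δ) {B x : ℝ}
    (hB : |heatResidual u s x| ≤ B) :
    heatResidual u s x * heatResidual u s x * gaussianWeight s x ≤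
      2 * C ^ 2 * (u (x, s) * u (x, s) * gaussianWeight s x
        + dx u (x, s) * dx u (x, s) * gaussianWeight s x) + B ^ 2 * gaussianWeight s δ := by
  have hw := gaussianWeight_nonneg s x
  rcases le_or_gt |x| δ with hxδ | hxδ
  · have := mul_le_mul_of_nonneg_right (hC.heatResidual_sq_le hxδ hs.1.le hs.2) hw
    have := mul_nonneg (sq_nonneg B) (gaussianWeight_nonneg s δ)
    linarith
  · have hwδ := gaussianWeight_le_of_abs_le (y := x) (x := δ) hs.1.le
      ((abs_of_pos (hs.1.trans_le hs.2)).trans_le hxδ.le)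
    have := mul_le_mul (sq_le_sq.2 (hB.trans (le_abs_self B))) hwδ hw (sq_nonneg B)
    have := mul_nonneg (mul_nonneg zero_le_two (sq_nonneg C)) (add_nonneg
      (mul_nonneg (mul_self_nonneg (u (x, s))) hw) (mul_nonneg (mul_self_nonneg (dx u (x, s))) hw))
    linarith

lemma BackwardHeatInequality.residualMass_le (hu : ContDiff ℝ ∞ u) (hL : 0 ≤ L)
    (hC : BackwardHeatInequality C δ u) :
    ∃ M, 0 ≤ M ∧ ∀ s ∈ Ioc 0 δ, residualMass L u s ≤
      2 * C ^ 2 * (gaussianHeight L u s + gaussianHeight L (dx u) s) + M * gaussianWeight s δ := by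
  have hcont : Continuous (ds u + dx (dx u)) :=
    (contDiff_ds hu).continuous.add (contDiff_dx (contDiff_dx hu)).continuous
  obtain ⟨B, hB⟩ := (isCompact_Icc.prod isCompact_Icc).exists_bound_of_continuousOn
    (s := Icc (-L) L ×ˢ Icc 0 δ) hcont.continuousOn
  refine ⟨2 * L * B ^ 2, by positivity, fun s hs => ?_⟩
  have cx := continuous_slice (contDiff_dx hu) s
  have cr := continuous_heatResidual hu s
  have hint := intervalIntegral.integral_mono_on (μ := MeasureTheory.volume)
    (by linarith : -L ≤ L) (Continuous.intervalIntegrable (by fun_prop) _ _)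
    (Continuous.intervalIntegrable (by fun_prop) _ _) fun x hx =>
      hC.heatResidual_sq_mul_gaussianWeight_le hs (hB (x, s) ⟨hx, hs.1.le, hs.2⟩)
  refine hint.trans_eq ?_
  rw [intervalIntegral.integral_add, intervalIntegral.integral_const_mul,
    intervalIntegral.integral_add, intervalIntegral.integral_const]
  · simp only [gaussianHeight, gaussianInner, weightedInner, smul_eq_mul]
    ring
  all_goals exact Continuous.intervalIntegrable (by fun_prop) _ _

lemma gaussianHeight_nonneg (hL : 0 ≤ L) (u : ℝ × ℝ → ℝ) (s : ℝ) : 0 ≤ gaussianHeight L u s :=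
  weightedInner_self_nonneg (by linarith) fun x _ => gaussianWeight_nonneg s x

lemma mul_deriv_gaussianHeight_le (hu : ContDiff ℝ ∞ u) (hL : 0 ≤ L)
    (hsupp : SupportedInStrip L u) (hs : 0 < s) (hs1 : s ≤ 1) {K : ℝ} (hK : 0 ≤ K)
    (hres : residualMass L u s ≤ K * (gaussianHeight L u s + gaussianHeight L (dx u) s)) :
    s * (2 * gaussianInner L s (fun x => u (x, s)) (dilationDeriv u s)
        + gaussianHeight L u s / (2 * s)) ≤
      (3 + K) * (gaussianHeight L u s + s * gaussianHeight L (dx u) s) := by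
  have hH := gaussianHeight_nonneg hL u s
  have hsH := mul_le_mul_of_nonneg_right hs1 hH
  have := mul_le_mul_of_nonneg_left hsH hK
  have := mul_nonneg hs.le (gaussianHeight_nonneg hL (dx u) s)
  have := mul_le_mul_of_nonneg_left ((two_mul_gaussianInner_dilationDeriv_le hu hL hsupp hs).trans
    (add_le_add_right hres _)) hs.le
  calc _ = s * (2 * gaussianInner L s (fun x => u (x, s)) (dilationDeriv u s))
        + gaussianHeight L u s / 2 := by field_simp
    _ ≤ _ := by linarith

lemma neg_le_frequency_numerator (hu : ContDiff ℝ ∞ u) (hL : 0 ≤ L)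
    (hsupp : SupportedInStrip L u) (hs : 0 < s) (hs1 : s ≤ 1) {K : ℝ} (hK : 0 ≤ K)
    (hres : residualMass L u s ≤ K * (gaussianHeight L u s + gaussianHeight L (dx u) s)) :
    -((3 + K) * gaussianHeight L u s * (gaussianHeight L u s + s * gaussianHeight L (dx u) s)) ≤
      s * ((2 * gaussianInner L s (dilationDeriv u s)
            (fun x => dilationDeriv u s x - heatResidual u s x)
          - gaussianHeight L (dx u) s / (2 * s)) * gaussianHeight L u s
        - gaussianHeight L (dx u) s * (2 * gaussianInner L s (fun x => u (x, s)) (dilationDeriv u s)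
          + gaussianHeight L u s / (2 * s)))
        + gaussianHeight L (dx u) s * gaussianHeight L u s := by
  have hH := gaussianHeight_nonneg hL u s
  have hD := gaussianHeight_nonneg hL (dx u) s
  have hmono := mul_le_mul_of_nonneg_left (gaussianInner_mul_gaussianHeight_dx_le hu hL hsupp hs)
    hs.le
  have hQ := mul_le_mul_of_nonneg_left hres (mul_nonneg hs.le hH)
  have := mul_le_mul_of_nonneg_left (mul_le_mul_of_nonneg_right hs1 hH) (mul_nonneg hK hH)
  have hHD := mul_nonneg hH (mul_nonneg hs.le hD)
  have := mul_nonneg hK hHD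
  have := mul_nonneg hH hH
  have := mul_nonneg hK this
  calc _ ≤ 2 * s * (gaussianHeight L u s * gaussianInner L s (dilationDeriv u s)
          (fun x => dilationDeriv u s x - heatResidual u s x)
        - gaussianInner L s (fun x => u (x, s)) (dilationDeriv u s)
          * gaussianHeight L (dx u) s) := by linarith
    _ = _ := by field_simp; ring

theorem BackwardHeatInequality.exists_mul_pow_le_gaussianHeight (hu : ContDiff ℝ ∞ u)
    (hL : 0 ≤ L) (hsupp : SupportedInStrip L u) (hC : BackwardHeatInequality C δ u) (hδ1 : δ ≤ 1)
    {s₁ : ℝ} (hs₁ : s₁ ∈ Ioc 0 δ)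
    (hdom : ∀ s ∈ Ioc 0 s₁, gaussianWeight s δ ≤ gaussianHeight L u s) :
    ∃ c n, 0 < c ∧ ∀ s ∈ Ioc 0 s₁, c * s ^ (n : ℕ) ≤ gaussianHeight L u s := by
  obtain ⟨M, hM, hres⟩ := hC.residualMass_le hu hL
  have hres' (s : ℝ) (hs : s ∈ Ioc 0 s₁) : residualMass L u s ≤
      (2 * C ^ 2 + M) * (gaussianHeight L u s + gaussianHeight L (dx u) s) := by
    have := hres s ⟨hs.1, hs.2.trans hs₁.2⟩
    have := mul_le_mul_of_nonneg_left (hdom s hs) hM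
    have := mul_nonneg hM (gaussianHeight_nonneg hL (dx u) s)
    linarith
  have hK : 0 ≤ 2 * C ^ 2 + M := by positivity
  have hle_one (s : ℝ) (hs : s ∈ Ioc 0 s₁) : s ≤ 1 := hs.2.trans (hs₁.2.trans hδ1)
  exact exists_mul_pow_le hs₁.1 (by positivity)
    (fun s hs => (Real.exp_pos _).trans_le (hdom s hs))
    (fun s _ => gaussianHeight_nonneg hL (dx u) s)
    (fun s hs => hasDerivAt_gaussianHeight hu hL hsupp hs.1)
    (fun s hs => hasDerivAt_gaussianHeight_dx hu hL hsupp hs.1)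
    (fun s hs => mul_deriv_gaussianHeight_le hu hL hsupp hs.1 (hle_one s hs) hK (hres' s hs))
    (fun s hs => neg_le_frequency_numerator hu hL hsupp hs.1 (hle_one s hs) hK (hres' s hs))

end Frequency

section UniqueContinuation

open MeasureTheory

variable {u : ℝ × ℝ → ℝ} {C L δ s : ℝ} {n : ℕ}

lemma isParabolicBigO_of_jet_eq_zero (hu : ContDiff ℝ ∞ u) (hjet : ∀ i j, jet u i j = 0) (n : ℕ) :
    IsParabolicBigO (n + 1) u := by
  have hpart : parabolicPart n 0 u = 0 := by
    funext p
    simp [parabolicPart, parabolicCoeff, hjet]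
  simpa [hpart] using
    isParabolicBigO_sub_parabolicPart (k := n) (d := 0) hu fun i j _ => hjet i j

lemma pow_mul_gaussianWeight_le (hs : 0 < s) (x : ℝ) (n : ℕ) :
    (x ^ 2) ^ n * gaussianWeight s x ≤ (4 * s) ^ n * n ! := by
  have hexp := Real.pow_div_factorial_le_exp (x ^ 2 / (4 * s)) (by positivity) n
  rw [div_pow, div_div, div_le_iff₀ (by positivity)] at hexp
  calc (x ^ 2) ^ n * gaussianWeight s x
      ≤ Real.exp (x ^ 2 / (4 * s)) * ((4 * s) ^ n * n !) * gaussianWeight s x :=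
        mul_le_mul_of_nonneg_right hexp (gaussianWeight_nonneg s x)
    _ = (4 * s) ^ n * n ! * Real.exp (x ^ 2 / (4 * s) + -x ^ 2 / (4 * s)) := by
        rw [gaussianWeight, Real.exp_add]; ring
    _ = (4 * s) ^ n * n ! := by simp [neg_div]

lemma abs_add_sqrt_pow_mul_gaussianWeight_le (hs : 0 < s) (x : ℝ) (n : ℕ) :
    ((|x| + √s) ^ n) ^ 2 * gaussianWeight s x ≤ 4 ^ n * (4 ^ n * n ! + 1) * s ^ n := by
  have hw := gaussianWeight_nonneg s x
  have hsum : ((|x| + √s) ^ n) ^ 2 ≤ 4 ^ n * ((x ^ 2) ^ n + s ^ n) := by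
    have htwo : (2 : ℝ) ^ (n * 2 - 1) ≤ 4 ^ n := by
      rw [show (4 : ℝ) = 2 ^ 2 by norm_num, ← pow_mul', pow_le_pow_iff_right₀ one_lt_two]
      omega
    rw [← pow_mul]
    refine (add_pow_le (abs_nonneg x) (Real.sqrt_nonneg s) _).trans ?_
    rw [pow_mul', pow_mul', sq_abs, Real.sq_sqrt hs.le]
    exact mul_le_mul_of_nonneg_right htwo (by positivity)
  calc ((|x| + √s) ^ n) ^ 2 * gaussianWeight s x
      ≤ 4 ^ n * ((x ^ 2) ^ n + s ^ n) * gaussianWeight s x := mul_le_mul_of_nonneg_right hsum hw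
    _ = 4 ^ n * ((x ^ 2) ^ n * gaussianWeight s x + s ^ n * gaussianWeight s x) := by ring
    _ ≤ 4 ^ n * ((4 * s) ^ n * n ! + s ^ n * 1) := mul_le_mul_of_nonneg_left
        (add_le_add (pow_mul_gaussianWeight_le hs x n)
          (mul_le_mul_of_nonneg_left (gaussianWeight_le_one hs.le x) (by positivity)))
        (by positivity)
    _ = 4 ^ n * (4 ^ n * n ! + 1) * s ^ n := by ring

lemma IsParabolicBigO.exists_gaussianHeight_le (hu : ContDiff ℝ ∞ u) (hL : 0 ≤ L) (hL1 : L ≤ 1)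
    (h : IsParabolicBigO n u) : ∃ A, ∀ s ∈ Ioc 0 1, gaussianHeight L u s ≤ A * s ^ n := by
  obtain ⟨B, -, hbound⟩ := h
  refine ⟨2 * L * (B ^ 2 * (4 ^ n * (4 ^ n * n ! + 1))), fun s hs => ?_⟩
  have hpoint (x : ℝ) (hx : x ∈ Icc (-L) L) : u (x, s) * u (x, s) * gaussianWeight s x ≤
      B ^ 2 * (4 ^ n * (4 ^ n * n ! + 1) * s ^ n) := by
    have hux := hbound x (√s) ((abs_le.2 hx).trans hL1) (Real.sqrt_nonneg s)
      (Real.sqrt_le_one.2 hs.2)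
    rw [Real.sq_sqrt hs.1.le] at hux
    calc u (x, s) * u (x, s) * gaussianWeight s x
        ≤ (B * (|x| + √s) ^ n) ^ 2 * gaussianWeight s x := by
          rw [← sq]
          exact mul_le_mul_of_nonneg_right (sq_le_sq.2 (hux.trans (le_abs_self _)))
            (gaussianWeight_nonneg s x)
      _ = B ^ 2 * (((|x| + √s) ^ n) ^ 2 * gaussianWeight s x) := by ring
      _ ≤ _ := mul_le_mul_of_nonneg_left (abs_add_sqrt_pow_mul_gaussianWeight_le hs.1 x n)
          (sq_nonneg B)
  refine (intervalIntegral.integral_mono_on (μ := volume) (by linarith)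
    (Continuous.intervalIntegrable (by fun_prop) _ _) intervalIntegrable_const hpoint).trans_eq ?_
  rw [intervalIntegral.integral_const, smul_eq_mul]
  ring

lemma exists_mem_Ioc_mul_pow_lt {c A s₁ : ℝ} (hc : 0 < c) (hs₁ : 0 < s₁) (n : ℕ) :
    ∃ s ∈ Ioc 0 s₁, A * s ^ (n + 1) < c * s ^ n := by
  have hlim : Tendsto (fun s : ℝ => A * s) (𝓝[>] 0) (𝓝 0) := by
    simpa using tendsto_id_nhdsGT_zero.const_mul A
  obtain ⟨s, hsc, hs⟩ := ((hlim.eventually (gt_mem_nhds hc)).and (Ioc_mem_nhdsGT hs₁)).exists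
  refine ⟨s, hs, ?_⟩
  calc A * s ^ (n + 1) = A * s * s ^ n := by ring
    _ < c * s ^ n := mul_lt_mul_of_pos_right hsc (pow_pos hs.1 n)

lemma BackwardHeatInequality.exists_gaussianHeight_lt (hu : ContDiff ℝ ∞ u) (hL : 0 ≤ L)
    (hL1 : L ≤ 1) (hsupp : SupportedInStrip L u) (hC : BackwardHeatInequality C δ u)
    (hδ1 : δ ≤ 1) (hjet : ∀ i j, jet u i j = 0) {s₁ : ℝ} (hs₁ : s₁ ∈ Ioc 0 δ) :
    ∃ s ∈ Ioc 0 s₁, gaussianHeight L u s < gaussianWeight s δ := by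
  by_contra! hdom
  obtain ⟨c, n, hc, hlower⟩ :=
    hC.exists_mul_pow_le_gaussianHeight hu hL hsupp hδ1 hs₁ hdom
  obtain ⟨A, hupper⟩ :=
    (isParabolicBigO_of_jet_eq_zero hu hjet n).exists_gaussianHeight_le hu hL hL1
  obtain ⟨s, hs, hlt⟩ := exists_mem_Ioc_mul_pow_lt (A := A) hc hs₁.1 n
  exact (((hlower s hs).trans (hupper s ⟨hs.1, hs.2.trans (hs₁.2.trans hδ1)⟩)).trans_lt hlt).false

lemma integral_sq_le_of_gaussianHeight_lt (hu : ContDiff ℝ ∞ u) (hs : 0 < s) (hδ : 0 < δ)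
    (hδL : δ / 2 ≤ L) (hlt : gaussianHeight L u s < gaussianWeight s δ) :
    ∫ x in -(δ / 2)..δ / 2, u (x, s) ^ 2 ≤ Real.exp (-(3 * δ ^ 2 / 16) / s) := by
  have hmono : ∫ x in -(δ / 2)..δ / 2, gaussianWeight s (δ / 2) * u (x, s) ^ 2 ≤
      ∫ x in -(δ / 2)..δ / 2, u (x, s) * u (x, s) * gaussianWeight s x := by
    refine intervalIntegral.integral_mono_on (by linarith)
      (Continuous.intervalIntegrable (by fun_prop) _ _)
      (Continuous.intervalIntegrable (by fun_prop) _ _) fun x hx => ?_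
    rw [mul_comm, ← sq]
    exact mul_le_mul_of_nonneg_left (gaussianWeight_le_of_abs_le hs.le
      ((abs_le.2 hx).trans (le_abs_self _))) (sq_nonneg _)
  have hsub : ∫ x in -(δ / 2)..δ / 2, u (x, s) * u (x, s) * gaussianWeight s x ≤
      gaussianHeight L u s :=
    intervalIntegral.integral_mono_interval (by linarith) (by linarith) hδL
      (.of_forall fun x => mul_nonneg (mul_self_nonneg _) (gaussianWeight_nonneg s x))
      (Continuous.intervalIntegrable (by fun_prop) _ _)
  have hsplit : gaussianWeight s δ =
      gaussianWeight s (δ / 2) * Real.exp (-(3 * δ ^ 2 / 16) / s) := by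
    rw [gaussianWeight, gaussianWeight, ← Real.exp_add]
    congr 1
    field_simp
    ring
  rw [intervalIntegral.integral_const_mul] at hmono
  exact le_of_mul_le_mul_left ((hmono.trans hsub).trans (hlt.le.trans_eq hsplit)) (Real.exp_pos _)

lemma tendsto_exp_neg_div_nhdsGT_zero {c : ℝ} (hc : 0 < c) :
    Tendsto (fun s : ℝ => Real.exp (-c / s)) (𝓝[>] 0) (𝓝 0) :=
  Real.tendsto_exp_atBot.comp
    (tendsto_inv_nhdsGT_zero.const_mul_atTop_of_neg (neg_neg_of_pos hc))

theorem BackwardHeatInequality.eq_zero_of_jet_eq_zero (hu : ContDiff ℝ ∞ u) (hL1 : L ≤ 1)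
    (hsupp : SupportedInStrip L u) (hC : BackwardHeatInequality C δ u) (hδ : 0 < δ)
    (hδL : δ / 2 ≤ L) (hδ1 : δ ≤ 1) (hjet : ∀ i j, jet u i j = 0) {x : ℝ} (hx : |x| ≤ δ / 2) :
    u (x, 0) = 0 := by
  set mass : ℝ → ℝ := fun s => ∫ x in -(δ / 2)..δ / 2, u (x, s) ^ 2
  have hcont : Continuous mass := by
    refine intervalIntegral.continuous_parametric_intervalIntegral_of_continuous' ?_ _ _
    have := hu.continuous
    simp only [Function.uncurry_def]
    fun_prop
  have hsmall : ∃ᶠ s in 𝓝[>] 0, mass s ≤ Real.exp (-(3 * δ ^ 2 / 16) / s) := by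
    refine frequently_iff.2 fun {U} hU => ?_
    obtain ⟨s₁, hs₁, hsub⟩ := mem_nhdsGT_iff_exists_Ioc_subset.1 hU
    have hs₁ : (0 : ℝ) < s₁ := hs₁
    obtain ⟨s, hs, hlt⟩ := hC.exists_gaussianHeight_lt (s₁ := min s₁ δ) hu (by linarith) hL1
      hsupp hδ1 hjet ⟨lt_min hs₁ hδ, min_le_right _ _⟩
    exact ⟨s, hsub ⟨hs.1, hs.2.trans (min_le_left _ _)⟩,
      integral_sq_le_of_gaussianHeight_lt hu hs.1 hδ hδL hlt⟩
  have hzero : mass 0 ≤ 0 := le_of_tendsto_of_tendsto_of_frequently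
    ((hcont.tendsto 0).mono_left nhdsWithin_le_nhds)
    (tendsto_exp_neg_div_nhdsGT_zero (by positivity)) hsmall
  by_contra hne
  have c := continuous_slice hu 0
  exact (intervalIntegral.integral_pos (f := fun x => u (x, 0) ^ 2) (by linarith)
    (c.pow 2).continuousOn (fun _ _ => sq_nonneg _) ⟨x, abs_le.1 hx, by positivity⟩).not_ge hzero

end UniqueContinuation

section EnergyInequalities

variable {H D H' D' : ℝ → ℝ} {k c d t₀ t : ℝ}

-- `ε` regularizes the Dirichlet quotient `D / H`, since `H` might vanish.
lemma dirichletQuotient_le {ε a b : ℝ} (hε : 0 < ε) (hab : a ≤ b) (hpos : 0 < H a)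
    (hH0 : ∀ s ∈ Icc a b, 0 ≤ H s) (hD0 : 0 ≤ D a)
    (hH : ∀ s ∈ Icc a b, HasDerivAt H (H' s) s) (hD : ∀ s ∈ Icc a b, HasDerivAt D (D' s) s)
    (hD' : ∀ s ∈ Icc a b, D' s ≤ k * D s)
    (hquot : ∀ s ∈ Icc a b, D' s * H s - D s * H' s ≤ k * D s * H s) :
    D b ≤ D a / H a * Real.exp (k * (b - a)) * (H b + ε) := by
  have hpos' (s : ℝ) (hs : s ∈ Icc a b) : 0 < H s + ε := by linarith [hH0 s hs]
  have hgron := le_mul_exp_of_deriv_le (K := k) hab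
    (fun s hs => (hD s hs).fun_div ((hH s hs).add_const ε) (hpos' s hs).ne') fun s hs => by
      have := hpos' s hs
      rw [div_le_iff₀ (by positivity)]
      calc D' s * (H s + ε) - D s * H' s ≤ k * D s * (H s + ε) := by
            linarith [hquot s hs, mul_le_mul_of_nonneg_right (hD' s hs) hε.le]
        _ = k * (D s / (H s + ε)) * (H s + ε) ^ 2 := by field_simp
  rw [← div_le_iff₀ (hpos' b ⟨hab, le_rfl⟩)]
  refine hgron.trans ?_
  gcongr
  linarith

lemma eq_zero_of_energy_inequalities (hk : 0 ≤ k) (ht₀ : t₀ ∈ Ioo c d)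
    (hH0 : ∀ s ∈ Ioo c d, 0 ≤ H s) (hD0 : ∀ s ∈ Ioo c d, 0 ≤ D s)
    (hH : ∀ s ∈ Ioo c d, HasDerivAt H (H' s) s) (hD : ∀ s ∈ Ioo c d, HasDerivAt D (D' s) s)
    (hH'_le : ∀ s ∈ Ioo c d, H' s ≤ k * H s)
    (hH'_ge : ∀ s ∈ Ioo c d, -(k * H s + 3 * D s) ≤ H' s)
    (hD' : ∀ s ∈ Ioo c d, D' s ≤ k * D s)
    (hquot : ∀ s ∈ Ioo c d, D' s * H s - D s * H' s ≤ k * D s * H s)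
    (hzero : H t₀ = 0) (ht : t ∈ Ioo c d) : H t = 0 := by
  refine le_antisymm ?_ (hH0 t ht)
  rcases le_total t₀ t with hle | hle
  · have hsub : Icc t₀ t ⊆ Ioo c d := Icc_subset_Ioo ht₀.1 ht.2
    simpa [hzero] using le_mul_exp_of_deriv_le hle (fun s hs => hH s (hsub hs))
      fun s hs => hH'_le s (hsub hs)
  · by_contra! hpos
    set M := D t / H t * Real.exp (k * (t₀ - t))
    have hquotient {ε s : ℝ} (hε : 0 < ε) (hs : s ∈ Icc t t₀) : D s ≤ M * (H s + ε) := by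
      have hsub : Icc t s ⊆ Ioo c d := Icc_subset_Ioo ht.1 (hs.2.trans_lt ht₀.2)
      have hHs := hH0 s (hsub ⟨hs.1, le_rfl⟩)
      have hDt := hD0 t ht
      refine (dirichletQuotient_le hε hs.1 hpos (fun x hx => hH0 x (hsub hx)) hDt
        (fun x hx => hH x (hsub hx)) (fun x hx => hD x (hsub hx)) (fun x hx => hD' x (hsub hx))
        fun x hx => hquot x (hsub hx)).trans ?_
      simp only [M]
      gcongr
      exact hs.2
    have hdecay (ε : ℝ) (hε : 0 < ε) : H t * Real.exp (-(k + 3 * M) * (t₀ - t)) ≤ 0 + ε := by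
      have hsub : Icc t t₀ ⊆ Ioo c d := Icc_subset_Ioo ht.1 ht₀.2
      have := mul_exp_le_of_le_deriv (H := fun s => H s + ε) (K := -(k + 3 * M)) hle
        (fun s hs => (hH s (hsub hs)).add_const ε) fun s hs => by
          have := mul_nonneg hk hε.le
          linarith [hH'_ge s (hsub hs), hquotient hε hs]
      rw [hzero] at this
      refine le_trans ?_ this
      gcongr
      linarith
    have := le_of_forall_pos_le_add hdecay
    have := mul_pos hpos (Real.exp_pos (-(k + 3 * M) * (t₀ - t)))
    linarith

end EnergyInequalities

open Function

/-- A solution `v(r, t) = r q(r, t)` of `v_t = v_rr + (n / r) v_r - (n / r²) v + β q` on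
`[0, R] × (c, d)` vanishing at `r = 0` and `r = R`, together with its derivatives. It is recorded
through the quotient `q = v / r`, which is regular up to `r = 0`; thus `vt = r qt`. -/
structure RadialSolution (n : ℕ) (R c d : ℝ) where
  (q qt vr vrr vrt β : ℝ → ℝ → ℝ)
  continuousOn_q : ContinuousOn (uncurry q) (Icc 0 R ×ˢ Ioo c d)
  continuousOn_qt : ContinuousOn (uncurry qt) (Icc 0 R ×ˢ Ioo c d)
  continuousOn_vr : ContinuousOn (uncurry vr) (Icc 0 R ×ˢ Ioo c d)
  continuousOn_vrt : ContinuousOn (uncurry vrt) (Icc 0 R ×ˢ Ioo c d)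
  continuousOn_β : ContinuousOn (uncurry β) (Icc 0 R ×ˢ Ioo c d)
  hasDerivAt_q {r t} : r ∈ Ioo 0 R → t ∈ Ioo c d → HasDerivAt (q r) (qt r t) t
  hasDerivAt_v {r t} : r ∈ Ioo 0 R → t ∈ Ioo c d → HasDerivAt (fun x => x * q x t) (vr r t) r
  hasDerivAt_vt {r t} : r ∈ Ioo 0 R → t ∈ Ioo c d → HasDerivAt (fun x => x * qt x t) (vrt r t) r
  hasDerivAt_vr_left {r t} : r ∈ Ioo 0 R → t ∈ Ioo c d → HasDerivAt (fun x => vr x t) (vrr r t) r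
  hasDerivAt_vr_right {r t} : r ∈ Ioo 0 R → t ∈ Ioo c d → HasDerivAt (vr r) (vrt r t) t
  q_boundary {t} : t ∈ Ioo c d → q R t = 0
  qt_boundary {t} : t ∈ Ioo c d → qt R t = 0
  equation {r t} : r ∈ Ioo 0 R → t ∈ Ioo c d →
    r * qt r t = vrr r t + n / r * vr r t - n / r * q r t + β r t * q r t

namespace RadialSolution

variable {n : ℕ} {R c d t : ℝ} (S : RadialSolution n R c d)

/-- The `L²` inner product of radial functions on the ball of radius `R`, up to a constant: the
weight `rⁿ` is the one of dimension `n + 1`. -/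
noncomputable def radialInner (n : ℕ) (R : ℝ) (f g : ℝ → ℝ) : ℝ :=
  weightedInner (fun r => r ^ n) 0 R f g

/-- The mass `∫ v² rⁿ`. -/
noncomputable def mass (t : ℝ) : ℝ :=
  radialInner n R (fun r => r * S.q r t) (fun r => r * S.q r t)

/-- The Dirichlet energy `∫ (v_r² + n v² / r²) rⁿ`. -/
noncomputable def energy (t : ℝ) : ℝ :=
  radialInner n R (fun r => S.vr r t) (fun r => S.vr r t)
    + n * radialInner n R (fun r => S.q r t) (fun r => S.q r t)

/-- The time derivative of the mass. -/
noncomputable def massDeriv (t : ℝ) : ℝ :=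
  2 * radialInner n R (fun r => r * S.q r t) (fun r => r * S.qt r t)

/-- The time derivative of the energy, after integration by parts. -/
noncomputable def energyDeriv (t : ℝ) : ℝ :=
  -2 * radialInner n R (fun r => r * S.qt r t) fun r => r * S.qt r t - S.β r t * S.q r t

lemma weight_nonneg (n : ℕ) {R : ℝ} : ∀ r ∈ Icc (0 : ℝ) R, 0 ≤ r ^ n :=
  fun _ hr => pow_nonneg hr.1 n

lemma hasDerivAt_radialInner_self (hR : 0 ≤ R) {f f' : ℝ → ℝ → ℝ} (ht : t ∈ Ioo c d)
    (hf : ContinuousOn (uncurry f) (Icc 0 R ×ˢ Ioo c d))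
    (hf' : ContinuousOn (uncurry f') (Icc 0 R ×ˢ Ioo c d))
    (hderiv : ∀ r ∈ Ioo 0 R, ∀ s ∈ Ioo c d, HasDerivAt (f r) (f' r s) s) :
    HasDerivAt (fun s => radialInner n R (fun r => f r s) (fun r => f r s))
      (2 * radialInner n R (fun r => f r t) (fun r => f' r t)) t := by
  have hw : ContinuousOn (fun p : ℝ × ℝ => p.1 ^ n) (Icc 0 R ×ˢ Ioo c d) := by fun_prop
  have hff' : ContinuousOn (fun p : ℝ × ℝ => 2 * (f p.1 p.2 * f' p.1 p.2 * p.1 ^ n))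
      (Icc 0 R ×ˢ Ioo c d) := continuousOn_const.mul ((hf.mul hf').mul hw)
  have := hasDerivAt_intervalIntegral (f := fun r s => f r s * f r s * r ^ n)
    (f' := fun r s => 2 * (f r s * f' r s * r ^ n)) hR ht ((hf.mul hf).mul hw) hff' fun r hr s hs =>
      (((hderiv r hr s hs).fun_mul (hderiv r hr s hs)).mul_const (r ^ n)).congr_deriv (by ring)
  rwa [intervalIntegral.integral_const_mul] at this

lemma hasDerivAt_mass (hR : 0 ≤ R) (ht : t ∈ Ioo c d) : HasDerivAt S.mass (S.massDeriv t) t :=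
  hasDerivAt_radialInner_self (f := fun r s => r * S.q r s) (f' := fun r s => r * S.qt r s) hR ht
    (continuousOn_fst.mul S.continuousOn_q) (continuousOn_fst.mul S.continuousOn_qt)
    fun r hr _ hs => (S.hasDerivAt_q hr hs).const_mul r

lemma radialInner_integration_by_parts (hn : n ≠ 0) (hR : 0 ≤ R) (ht : t ∈ Ioo c d) {γ g' : ℝ → ℝ}
    (hγ : ContinuousOn γ (Icc 0 R)) (hg' : ContinuousOn g' (Icc 0 R)) (hγR : γ R = 0)
    (hderiv : ∀ r ∈ Ioo 0 R, HasDerivAt (fun x => x * γ x) (g' r) r) :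
    radialInner n R (fun r => S.vr r t) g' + n * radialInner n R (fun r => S.q r t) γ =
      -radialInner n R (fun r => r * γ r) fun r => r * S.qt r t - S.β r t * S.q r t := by
  have cq := continuousOn_slice S.continuousOn_q ht
  have cqt := continuousOn_slice S.continuousOn_qt ht
  have cvr := continuousOn_slice S.continuousOn_vr ht
  have cβ := continuousOn_slice S.continuousOn_β ht
  have hflux : ∀ r ∈ Ioo 0 R, HasDerivAt (fun r => S.vr r t * (r * γ r) * r ^ n)
      (S.vr r t * g' r * r ^ n + n * (S.q r t * γ r * r ^ n)
        + r * γ r * (r * S.qt r t - S.β r t * S.q r t) * r ^ n) r := fun r hr => by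
    refine (((S.hasDerivAt_vr_left hr ht).fun_mul (hderiv r hr)).fun_mul
      (hasDerivAt_pow n r)).congr_deriv ?_
    have := hr.1.ne'
    rw [S.equation hr ht, ← mul_pow_sub_one hn r]
    field_simp
    ring
  have hint {f : ℝ → ℝ} (hf : ContinuousOn f (Icc 0 R)) :=
    hf.intervalIntegrable_of_Icc hR (μ := MeasureTheory.volume)
  have hftc := intervalIntegral.integral_eq_sub_of_hasDerivAt_of_le hR (by fun_prop) hflux
    (hint (by fun_prop))
  rw [intervalIntegral.integral_add (hint (by fun_prop)) (hint (by fun_prop)),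
    intervalIntegral.integral_add (hint (by fun_prop)) (hint (by fun_prop)),
    intervalIntegral.integral_const_mul] at hftc
  simp only [hγR, mul_zero, zero_mul, sub_zero] at hftc
  exact eq_neg_of_add_eq_zero_left hftc

lemma energy_eq (hn : n ≠ 0) (hR : 0 ≤ R) (ht : t ∈ Ioo c d) :
    S.energy t = -radialInner n R (fun r => r * S.q r t)
      fun r => r * S.qt r t - S.β r t * S.q r t :=
  S.radialInner_integration_by_parts hn hR ht (continuousOn_slice S.continuousOn_q ht)
    (continuousOn_slice S.continuousOn_vr ht) (S.q_boundary ht) fun _ hr => S.hasDerivAt_v hr ht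

lemma hasDerivAt_energy (hn : n ≠ 0) (hR : 0 ≤ R) (ht : t ∈ Ioo c d) :
    HasDerivAt S.energy (S.energyDeriv t) t := by
  have hvr := hasDerivAt_radialInner_self (n := n) hR ht S.continuousOn_vr S.continuousOn_vrt
    fun r hr s hs => S.hasDerivAt_vr_right hr hs
  have hq := hasDerivAt_radialInner_self (n := n) hR ht S.continuousOn_q S.continuousOn_qt
    fun r hr s hs => S.hasDerivAt_q hr hs
  have hparts := S.radialInner_integration_by_parts hn hR ht
    (continuousOn_slice S.continuousOn_qt ht) (continuousOn_slice S.continuousOn_vrt ht)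
    (S.qt_boundary ht) fun _ hr => S.hasDerivAt_vt hr ht
  refine (hvr.fun_add (hq.const_mul (n : ℝ))).congr_deriv ?_
  linarith [energyDeriv.eq_1 S t]

lemma mass_nonneg (hR : 0 ≤ R) : 0 ≤ S.mass t :=
  weightedInner_self_nonneg hR (weight_nonneg n)

lemma radialInner_q_le_energy (hn : n ≠ 0) (hR : 0 ≤ R) :
    radialInner n R (fun r => S.q r t) (fun r => S.q r t) ≤ S.energy t := by
  have hn1 : (1 : ℝ) ≤ n := by exact_mod_cast Nat.one_le_iff_ne_zero.2 hn
  have hvr : 0 ≤ radialInner n R (fun r => S.vr r t) (fun r => S.vr r t) :=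
    weightedInner_self_nonneg hR (weight_nonneg n)
  have hq : 0 ≤ radialInner n R (fun r => S.q r t) (fun r => S.q r t) :=
    weightedInner_self_nonneg hR (weight_nonneg n)
  linarith [le_mul_of_one_le_left hq hn1, energy.eq_1 S t]

lemma energy_nonneg (hn : n ≠ 0) (hR : 0 ≤ R) : 0 ≤ S.energy t :=
  (weightedInner_self_nonneg hR (weight_nonneg n)).trans (S.radialInner_q_le_energy hn hR)

section Bounded

variable {C : ℝ} (hβ : ∀ r ∈ Icc 0 R, |S.β r t| ≤ C)

include hβ

lemma radialInner_β_mul_le (hR : 0 ≤ R) (ht : t ∈ Ioo c d) {f : ℝ → ℝ}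
    (hf : ContinuousOn f (Icc 0 R)) :
    radialInner n R (fun r => S.β r t * f r) (fun r => S.β r t * f r) ≤
      C ^ 2 * radialInner n R f f := by
  have cβ := continuousOn_slice S.continuousOn_β ht
  calc radialInner n R (fun r => S.β r t * f r) (fun r => S.β r t * f r)
      ≤ radialInner n R (fun r => C ^ 2 * f r) f :=
        weightedInner_mono hR (by fun_prop) (weight_nonneg n) (by fun_prop) (by fun_prop)
          (by fun_prop) hf fun r hr => by
            have := mul_le_mul_of_nonneg_right (sq_le_sq.2 ((hβ r hr).trans (le_abs_self C)))
              (mul_self_nonneg (f r))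
            linarith
    _ = C ^ 2 * radialInner n R f f := by
        simp only [radialInner, weightedInner, mul_assoc, intervalIntegral.integral_const_mul]

lemma abs_massDeriv_add_two_mul_energy_le (hn : n ≠ 0) (hR : 0 ≤ R) (ht : t ∈ Ioo c d) :
    |S.massDeriv t + 2 * S.energy t| ≤ C ^ 2 * S.mass t + S.energy t := by
  have cq := continuousOn_slice S.continuousOn_q ht
  have cqt := continuousOn_slice S.continuousOn_qt ht
  have cβ := continuousOn_slice S.continuousOn_β ht
  have hw : ContinuousOn (fun r : ℝ => r ^ n) (Icc 0 R) := by fun_prop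
  have hsub := weightedInner_sub_right (h := fun r => r * S.q r t)
    (f := fun r => r * S.qt r t) (g := fun r => S.β r t * S.q r t) hR hw
    (by fun_prop) (by fun_prop) (by fun_prop)
  have hswap : radialInner n R (fun r => r * S.q r t) (fun r => S.β r t * S.q r t) =
      radialInner n R (fun r => S.β r t * (r * S.q r t)) (fun r => S.q r t) :=
    intervalIntegral.integral_congr fun r _ => by ring
  calc |S.massDeriv t + 2 * S.energy t|
      = 2 * |radialInner n R (fun r => S.β r t * (r * S.q r t)) fun r => S.q r t| := by
        rw [S.energy_eq hn hR ht, massDeriv, ← abs_two (α := ℝ), ← abs_mul, ← hswap, abs_two]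
        simp only [radialInner]
        congr 1
        linarith
    _ ≤ radialInner n R (fun r => S.β r t * (r * S.q r t)) (fun r => S.β r t * (r * S.q r t))
          + radialInner n R (fun r => S.q r t) fun r => S.q r t :=
        two_mul_abs_weightedInner_le hR hw (weight_nonneg n) (by fun_prop) cq
    _ ≤ C ^ 2 * S.mass t + S.energy t :=
        add_le_add (S.radialInner_β_mul_le hβ hR ht (by fun_prop))
          (S.radialInner_q_le_energy hn hR)

lemma radialInner_βq_le_energy (hn : n ≠ 0) (hR : 0 ≤ R) (ht : t ∈ Ioo c d) :
    radialInner n R (fun r => S.β r t * S.q r t) (fun r => S.β r t * S.q r t) ≤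
      C ^ 2 * S.energy t :=
  (S.radialInner_β_mul_le hβ hR ht (continuousOn_slice S.continuousOn_q ht)).trans
    (mul_le_mul_of_nonneg_left (S.radialInner_q_le_energy hn hR) (sq_nonneg C))

lemma energyDeriv_le (hn : n ≠ 0) (hR : 0 ≤ R) (ht : t ∈ Ioo c d) :
    S.energyDeriv t ≤ C ^ 2 * S.energy t := by
  have cq := continuousOn_slice S.continuousOn_q ht
  have cqt := continuousOn_slice S.continuousOn_qt ht
  have cβ := continuousOn_slice S.continuousOn_β ht
  have hsq := (weightedInner_self_nonneg hR (weight_nonneg n)).trans_eq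
    (weightedInner_self_sub (f := fun r => r * S.qt r t) (g := fun r => S.β r t * S.q r t)
      (w := fun r => r ^ n) hR (by fun_prop) (by fun_prop) (by fun_prop)).symm
  have hf := S.radialInner_βq_le_energy hβ hn hR ht
  have hCE : 0 ≤ C ^ 2 * S.energy t := mul_nonneg (sq_nonneg C) (S.energy_nonneg hn hR)
  simp only [energyDeriv, radialInner] at *
  linarith

lemma energyDeriv_mul_mass_sub_le (hn : n ≠ 0) (hR : 0 ≤ R) (ht : t ∈ Ioo c d) :
    S.energyDeriv t * S.mass t - S.energy t * S.massDeriv t ≤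
      C ^ 2 * S.energy t * S.mass t := by
  have cq := continuousOn_slice S.continuousOn_q ht
  have cqt := continuousOn_slice S.continuousOn_qt ht
  have cβ := continuousOn_slice S.continuousOn_β ht
  have hcs := weightedInner_mul_le (u := fun r => r * S.q r t) (z := fun r => r * S.qt r t)
    (w := fun r => r ^ n) (f := fun r => S.β r t * S.q r t) hR (by fun_prop) (weight_nonneg n)
    (by fun_prop) (by fun_prop) (by fun_prop)
  have hmass := S.mass_nonneg (t := t) hR
  have hf := mul_le_mul_of_nonneg_right (S.radialInner_βq_le_energy hβ hn hR ht) hmass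
  have hCE := mul_nonneg (mul_nonneg (sq_nonneg C) (S.energy_nonneg (t := t) hn hR)) hmass
  rw [massDeriv, S.energy_eq hn hR ht, energyDeriv] at *
  simp only [radialInner, mass] at *
  linarith

end Bounded

lemma q_eq_zero_of_mass_eq_zero (ht : t ∈ Ioo c d) (hmass : S.mass t = 0) {r : ℝ}
    (hr : r ∈ Ioc 0 R) : S.q r t = 0 := by
  have cq := continuousOn_slice S.continuousOn_q ht
  by_contra hne
  have := hr.1
  refine hmass.not_gt (intervalIntegral.integral_pos (this.trans_le hr.2) (by fun_prop)
    (fun x hx => mul_nonneg (mul_self_nonneg _) (pow_nonneg hx.1.le n))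
    ⟨r, Ioc_subset_Icc_self hr, ?_⟩)
  have := mul_self_pos.2 (mul_ne_zero this.ne' hne)
  positivity

lemma eq_zero_of_eq_zero_at (hn : n ≠ 0) (hR : 0 ≤ R) {t₀ : ℝ} (ht₀ : t₀ ∈ Ioo c d)
    (hzero : ∀ r ∈ Icc 0 R, r * S.q r t₀ = 0) (ht : t ∈ Ioo c d) {r : ℝ} (hr : r ∈ Ioc 0 R) :
    S.q r t = 0 := by
  obtain ⟨c', hc, hc'⟩ := exists_between (lt_min ht₀.1 ht.1)
  obtain ⟨d', hd', hd⟩ := exists_between (max_lt ht₀.2 ht.2)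
  rw [lt_min_iff] at hc'
  rw [max_lt_iff] at hd'
  have hsub : Icc c' d' ⊆ Ioo c d := Icc_subset_Ioo hc hd
  obtain ⟨C, hC⟩ := (isCompact_Icc.prod isCompact_Icc).exists_bound_of_continuousOn
    (S.continuousOn_β.mono (prod_mono_right hsub))
  replace hsub := Ioo_subset_Icc_self.trans hsub
  have hβ {s : ℝ} (hs : s ∈ Ioo c' d') : ∀ r ∈ Icc 0 R, |S.β r s| ≤ C :=
    fun r hr => hC (r, s) ⟨hr, Ioo_subset_Icc_self hs⟩
  have hmassDeriv {s : ℝ} (hs : s ∈ Ioo c' d') :=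
    abs_le.1 (S.abs_massDeriv_add_two_mul_energy_le (hβ hs) hn hR (hsub hs))
  refine S.q_eq_zero_of_mass_eq_zero ht (eq_zero_of_energy_inequalities (sq_nonneg C)
    ⟨hc'.1, hd'.1⟩ (fun s _ => S.mass_nonneg hR) (fun s _ => S.energy_nonneg hn hR)
    (fun s hs => S.hasDerivAt_mass hR (hsub hs))
    (fun s hs => S.hasDerivAt_energy hn hR (hsub hs))
    (fun s hs => ?_) (fun s hs => ?_) (fun s hs => S.energyDeriv_le (hβ hs) hn hR (hsub hs))
    (fun s hs => S.energyDeriv_mul_mass_sub_le (hβ hs) hn hR (hsub hs)) ?_ ⟨hc'.2, hd'.2⟩) hr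
  · linarith [hmassDeriv hs, S.energy_nonneg (t := s) hn hR]
  · linarith [hmassDeriv hs]
  · refine (intervalIntegral.integral_congr fun r hr => ?_).trans intervalIntegral.integral_zero
    rw [uIcc_of_le hR] at hr
    simp [hzero r hr]

end RadialSolution

section DerivativesWithin

variable {A B : Set ℝ} {S : Set (ℝ × ℝ)} {f : ℝ × ℝ → ℝ} {r t : ℝ}

/-- The partial derivative of `f (r, t)` in `r` within `S`, meaningful up to the boundary of `S`. -/
noncomputable def dxWithin (S : Set (ℝ × ℝ)) (f : ℝ × ℝ → ℝ) : ℝ × ℝ → ℝ :=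
  fun p => fderivWithin ℝ f S p (1, 0)

/-- The partial derivative of `f (r, t)` in `t` within `S`, meaningful up to the boundary of `S`. -/
noncomputable def dsWithin (S : Set (ℝ × ℝ)) (f : ℝ × ℝ → ℝ) : ℝ × ℝ → ℝ :=
  fun p => fderivWithin ℝ f S p (0, 1)

lemma contDiffOn_dxWithin {n m : WithTop ℕ∞} (hf : ContDiffOn ℝ n f S) (hS : UniqueDiffOn ℝ S)
    (hmn : m + 1 ≤ n) : ContDiffOn ℝ m (dxWithin S f) S :=
  (hf.fderivWithin hS hmn).clm_apply contDiffOn_const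

lemma contDiffOn_dsWithin {n m : WithTop ℕ∞} (hf : ContDiffOn ℝ n f S) (hS : UniqueDiffOn ℝ S)
    (hmn : m + 1 ≤ n) : ContDiffOn ℝ m (dsWithin S f) S :=
  (hf.fderivWithin hS hmn).clm_apply contDiffOn_const

lemma hasDerivAt_dxWithin (hf : DifferentiableOn ℝ f (A ×ˢ B)) (hr : A ∈ 𝓝 r) (ht : t ∈ B) :
    HasDerivAt (fun x => f (x, t)) (dxWithin (A ×ˢ B) f (r, t)) r :=
  ((hf (r, t) ⟨mem_of_mem_nhds hr, ht⟩).hasFDerivWithinAt.comp_hasDerivWithinAt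
    (f := fun x => (x, t)) r ((hasDerivAt_id r).prodMk (hasDerivAt_const r t)).hasDerivWithinAt
    fun _ hx => ⟨hx, ht⟩).hasDerivAt hr

lemma hasDerivAt_dsWithin (hf : DifferentiableOn ℝ f (A ×ˢ B)) (hr : r ∈ A) (ht : B ∈ 𝓝 t) :
    HasDerivAt (fun s => f (r, s)) (dsWithin (A ×ˢ B) f (r, t)) t :=
  ((hf (r, t) ⟨hr, mem_of_mem_nhds ht⟩).hasFDerivWithinAt.comp_hasDerivWithinAt
    (f := fun s => (r, s)) t ((hasDerivAt_const t r).prodMk (hasDerivAt_id t)).hasDerivWithinAt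
    fun _ hs => ⟨hr, hs⟩).hasDerivAt ht

lemma dsWithin_dxWithin_comm {p : ℝ × ℝ} (hf : ContDiffOn ℝ 2 f S) (hS : UniqueDiffOn ℝ S)
    (hp : p ∈ S) (hpS : p ∈ closure (interior S)) :
    dsWithin S (dxWithin S f) p = dxWithin S (dsWithin S f) p := by
  have hd : DifferentiableWithinAt ℝ (fderivWithin ℝ f S) S p :=
    (hf.fderivWithin hS (m := 1) (by norm_num)).differentiableOn one_ne_zero p hp
  have apply_fderivWithin (w z : ℝ × ℝ) :
      fderivWithin ℝ (fun q => fderivWithin ℝ f S q w) S p z =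
        fderivWithin ℝ (fderivWithin ℝ f S) S p z w := by
    simp [fderivWithin_clm_apply (hS p hp) hd (differentiableWithinAt_const w)]
  exact (apply_fderivWithin _ _).trans <|
    (((hf p hp).isSymmSndFDerivWithinAt (by simp) hS hpS hp).eq (0, 1) (1, 0)).trans
      (apply_fderivWithin _ _).symm

end DerivativesWithin

section HadamardQuotient

variable {R : ℝ} {B : Set ℝ} {f f' : ℝ × ℝ → ℝ}

/-- The quotient `f (r, t) / r`, completed by `f' (0, t)` at `r = 0`, where `f'` is the derivative
of `f` in `r`. -/
noncomputable def hadamardQuotient (f f' : ℝ × ℝ → ℝ) (r t : ℝ) : ℝ :=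
  if r = 0 then f' (0, t) else f (r, t) / r

lemma eq_mul_hadamardQuotient {r t : ℝ} (h0 : f (0, t) = 0) :
    f (r, t) = r * hadamardQuotient f f' r t := by
  rcases eq_or_ne r 0 with rfl | hr
  · rw [h0, zero_mul]
  · rw [hadamardQuotient, if_neg hr, mul_div_cancel₀ _ hr]

lemma exists_hadamardQuotient_eq {r t : ℝ} (hf : ContinuousOn f (Icc 0 R ×ˢ B))
    (hderiv : ∀ r ∈ Ioo 0 R, HasDerivAt (fun x => f (x, t)) (f' (r, t)) r)
    (h0 : f (0, t) = 0) (hr : r ∈ Icc 0 R) (ht : t ∈ B) :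
    ∃ ξ ∈ Icc 0 r, hadamardQuotient f f' r t = f' (ξ, t) := by
  rcases hr.1.eq_or_lt with rfl | hpos
  · exact ⟨0, ⟨le_rfl, le_rfl⟩, if_pos rfl⟩
  · have hcont : ContinuousOn (fun x => f (x, t)) (Icc 0 r) :=
      hf.comp (by fun_prop) fun x hx => ⟨⟨hx.1, hx.2.trans hr.2⟩, ht⟩
    obtain ⟨ξ, hξ, hslope⟩ := exists_hasDerivAt_eq_slope (fun x => f (x, t)) (fun x => f' (x, t))
      hpos hcont fun x hx => hderiv x ⟨hx.1, hx.2.trans_le hr.2⟩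
    refine ⟨ξ, Ioo_subset_Icc_self hξ, ?_⟩
    rw [hadamardQuotient, if_neg hpos.ne', hslope, h0, sub_zero, sub_zero]

theorem continuousOn_hadamardQuotient (hf : ContinuousOn f (Icc 0 R ×ˢ B))
    (hf' : ContinuousOn f' (Icc 0 R ×ˢ B))
    (hderiv : ∀ r ∈ Ioo 0 R, ∀ t ∈ B, HasDerivAt (fun x => f (x, t)) (f' (r, t)) r)
    (h0 : ∀ t ∈ B, f (0, t) = 0) :
    ContinuousOn (uncurry (hadamardQuotient f f')) (Icc 0 R ×ˢ B) := by
  rintro ⟨r, t⟩ ⟨hr, ht⟩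
  rcases eq_or_ne r 0 with rfl | hne
  · choose! ξ hξ hqξ using fun p (hp : p ∈ Icc 0 R ×ˢ B) =>
      exists_hadamardQuotient_eq hf (fun r hr => hderiv r hr p.2 hp.2) (h0 p.2 hp.2) hp.1 hp.2
    have hξ0 : Tendsto ξ (𝓝[Icc 0 R ×ˢ B] (0, t)) (𝓝 0) :=
      tendsto_of_tendsto_of_tendsto_of_le_of_le' tendsto_const_nhds
        continuousWithinAt_fst
        (eventually_mem_nhdsWithin.mono fun p hp => (hξ p hp).1)
        (eventually_mem_nhdsWithin.mono fun p hp => (hξ p hp).2)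
    have hlim : Tendsto (fun p => (ξ p, p.2)) (𝓝[Icc 0 R ×ˢ B] (0, t))
        (𝓝[Icc 0 R ×ˢ B] (0, t)) :=
      tendsto_nhdsWithin_iff.2 ⟨hξ0.prodMk_nhds continuousWithinAt_snd,
        eventually_mem_nhdsWithin.mono fun p hp =>
          ⟨⟨(hξ p hp).1, (hξ p hp).2.trans hp.1.2⟩, hp.2⟩⟩
    have hval : uncurry (hadamardQuotient f f') (0, t) = f' (0, t) := if_pos rfl
    rw [ContinuousWithinAt, hval]
    exact ((hf' (0, t) ⟨hr, ht⟩).tendsto.comp hlim).congr'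
      (eventually_mem_nhdsWithin.mono fun p hp => (hqξ p hp).symm)
  · refine ((hf _ ⟨hr, ht⟩).div continuousWithinAt_fst hne).congr_of_eventuallyEq ?_ (if_neg hne)
    exact (continuousWithinAt_fst.eventually_ne hne).mono fun p hp => if_neg hp

end HadamardQuotient

section RadialQuotient

variable {R t₁ t₂ r t : ℝ} {f : ℝ × ℝ → ℝ}

/-- The space-time cylinder `[0, R] × (t₁, t₂)`. -/
abbrev cylinder (R t₁ t₂ : ℝ) : Set (ℝ × ℝ) := Icc 0 R ×ˢ Ioo t₁ t₂

lemma uniqueDiffOn_cylinder (hR : 0 < R) : UniqueDiffOn ℝ (cylinder R t₁ t₂) :=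
  (uniqueDiffOn_Icc hR).prod isOpen_Ioo.uniqueDiffOn

/-- The quotient `f (r, t) / r` on the cylinder, completed by the derivative of `f` at `r = 0`. -/
noncomputable def radialQuotient (R t₁ t₂ : ℝ) (f : ℝ × ℝ → ℝ) : ℝ → ℝ → ℝ :=
  hadamardQuotient f (dxWithin (cylinder R t₁ t₂) f)

lemma hasDerivAt_dxWithin_cylinder (hf : ContDiffOn ℝ 1 f (cylinder R t₁ t₂)) (hr : r ∈ Ioo 0 R)
    (ht : t ∈ Ioo t₁ t₂) :
    HasDerivAt (fun x => f (x, t)) (dxWithin (cylinder R t₁ t₂) f (r, t)) r :=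
  hasDerivAt_dxWithin (hf.differentiableOn one_ne_zero) (Icc_mem_nhds hr.1 hr.2) ht

lemma hasDerivAt_dsWithin_cylinder (hf : ContDiffOn ℝ 1 f (cylinder R t₁ t₂)) (hr : r ∈ Icc 0 R)
    (ht : t ∈ Ioo t₁ t₂) :
    HasDerivAt (fun s => f (r, s)) (dsWithin (cylinder R t₁ t₂) f (r, t)) t :=
  hasDerivAt_dsWithin (hf.differentiableOn one_ne_zero) hr (isOpen_Ioo.mem_nhds ht)

lemma dsWithin_dxWithin_cylinder_comm (hf : ContDiffOn ℝ 2 f (cylinder R t₁ t₂)) (hr : r ∈ Ioo 0 R)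
    (ht : t ∈ Ioo t₁ t₂) :
    dsWithin (cylinder R t₁ t₂) (dxWithin (cylinder R t₁ t₂) f) (r, t) =
      dxWithin (cylinder R t₁ t₂) (dsWithin (cylinder R t₁ t₂) f) (r, t) :=
  dsWithin_dxWithin_comm hf (uniqueDiffOn_cylinder (hr.1.trans hr.2))
    ⟨Ioo_subset_Icc_self hr, ht⟩ <| subset_closure <| by
      rw [interior_prod_eq, interior_Icc, interior_Ioo]
      exact ⟨hr, ht⟩

lemma eq_mul_radialQuotient (h0 : f (0, t) = 0) :
    f (r, t) = r * radialQuotient R t₁ t₂ f r t :=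
  eq_mul_hadamardQuotient h0

lemma continuousOn_radialQuotient (hR : 0 < R) (hf : ContDiffOn ℝ 1 f (cylinder R t₁ t₂))
    (h0 : ∀ t ∈ Ioo t₁ t₂, f (0, t) = 0) :
    ContinuousOn (uncurry (radialQuotient R t₁ t₂ f)) (cylinder R t₁ t₂) :=
  continuousOn_hadamardQuotient hf.continuousOn
    (contDiffOn_dxWithin (m := 0) hf (uniqueDiffOn_cylinder hR) (by simp)).continuousOn
    (fun _ hr _ ht => hasDerivAt_dxWithin_cylinder hf hr ht) h0

lemma hasDerivAt_mul_radialQuotient (hf : ContDiffOn ℝ 1 f (cylinder R t₁ t₂)) (h0 : f (0, t) = 0)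
    (hr : r ∈ Ioo 0 R) (ht : t ∈ Ioo t₁ t₂) :
    HasDerivAt (fun x => x * radialQuotient R t₁ t₂ f x t)
      (dxWithin (cylinder R t₁ t₂) f (r, t)) r := by
  simp only [← eq_mul_radialQuotient h0]
  exact hasDerivAt_dxWithin_cylinder hf hr ht

lemma radialQuotient_eq_div (hr : r ≠ 0) : radialQuotient R t₁ t₂ f r t = f (r, t) / r :=
  if_neg hr

lemma hasDerivAt_radialQuotient (hf : ContDiffOn ℝ 1 f (cylinder R t₁ t₂)) (hr : r ∈ Ioo 0 R)
    (ht : t ∈ Ioo t₁ t₂) :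
    HasDerivAt (radialQuotient R t₁ t₂ f r)
      (radialQuotient R t₁ t₂ (dsWithin (cylinder R t₁ t₂) f) r t) t := by
  rw [radialQuotient_eq_div hr.1.ne']
  exact ((hasDerivAt_dsWithin_cylinder hf (Ioo_subset_Icc_self hr) ht).div_const
    r).congr_of_eventuallyEq (.of_forall fun _ => radialQuotient_eq_div hr.1.ne')

end RadialQuotient

/-- A classical solution `v`, smooth up to `r = 0` and `r = R`, of
`v_t = v_rr + ((m - 1) / r) v_r - (b / r²) v` on `[0, R] × (t₁, t₂)`. -/
structure IsClassicalSolution (m R t₁ t₂ : ℝ) (b v : ℝ → ℝ → ℝ) : Prop where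
  contDiffOn : ContDiffOn ℝ ∞ (uncurry v) (cylinder R t₁ t₂)
  equation : ∀ r ∈ Ioo 0 R, ∀ t ∈ Ioo t₁ t₂,
    deriv (v r) t = deriv (deriv (fun x => v x t)) r + ((m - 1) / r) * deriv (fun x => v x t) r
      - (b r t / r ^ 2) * v r t

namespace IsClassicalSolution

variable {m R t₁ t₂ t₀ : ℝ} {n : ℕ} {b v : ℝ → ℝ → ℝ}

lemma contDiffOn_one (hv : IsClassicalSolution m R t₁ t₂ b v) :
    ContDiffOn ℝ 1 (uncurry v) (cylinder R t₁ t₂) :=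
  hv.contDiffOn.of_le (by norm_cast)

lemma contDiffOn_dxWithin (hv : IsClassicalSolution m R t₁ t₂ b v) (hR : 0 < R) :
    ContDiffOn ℝ 1 (dxWithin (cylinder R t₁ t₂) (uncurry v)) (cylinder R t₁ t₂) :=
  RescaledLimit.contDiffOn_dxWithin hv.contDiffOn (uniqueDiffOn_cylinder hR) (by norm_cast)

lemma contDiffOn_dsWithin (hv : IsClassicalSolution m R t₁ t₂ b v) (hR : 0 < R) :
    ContDiffOn ℝ 1 (dsWithin (cylinder R t₁ t₂) (uncurry v)) (cylinder R t₁ t₂) :=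
  RescaledLimit.contDiffOn_dsWithin hv.contDiffOn (uniqueDiffOn_cylinder hR) (by norm_cast)

lemma equation_within (hv : IsClassicalSolution m R t₁ t₂ b v) {r t : ℝ}
    (hr : r ∈ Ioo 0 R) (ht : t ∈ Ioo t₁ t₂) :
    dsWithin (cylinder R t₁ t₂) (uncurry v) (r, t)
      = dxWithin (cylinder R t₁ t₂) (dxWithin (cylinder R t₁ t₂) (uncurry v)) (r, t)
        + (m - 1) / r * dxWithin (cylinder R t₁ t₂) (uncurry v) (r, t) - b r t / r ^ 2 * v r t := by
  have hvr {x : ℝ} (hx : x ∈ Ioo 0 R) :=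
    (hasDerivAt_dxWithin_cylinder hv.contDiffOn_one hx ht).deriv
  have hvrr : deriv (deriv fun x => v x t) r = _ :=
    (EventuallyEq.deriv_eq (eventually_of_mem (Ioo_mem_nhds hr.1 hr.2) fun _ => hvr)).trans
      (hasDerivAt_dxWithin_cylinder (hv.contDiffOn_dxWithin (hr.1.trans hr.2)) hr ht).deriv
  have hvt := (hasDerivAt_dsWithin_cylinder hv.contDiffOn_one (Ioo_subset_Icc_self hr) ht).deriv
  rw [← hvt, ← hvrr, ← hvr hr]
  exact hv.equation r hr t ht

lemma dsWithin_eq_zero (hv : IsClassicalSolution m R t₁ t₂ b v) {r : ℝ} (hr : r ∈ Icc 0 R)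
    (h0 : ∀ t ∈ Ioo t₁ t₂, v r t = 0) {t : ℝ} (ht : t ∈ Ioo t₁ t₂) :
    dsWithin (cylinder R t₁ t₂) (uncurry v) (r, t) = 0 :=
  (hasDerivAt_dsWithin_cylinder hv.contDiffOn_one hr ht).unique
    ((hasDerivAt_const t 0).congr_of_eventuallyEq
      (eventually_of_mem (isOpen_Ioo.mem_nhds ht) h0))

/-- A classical solution with zero boundary values, recorded through `v / r`. -/
noncomputable def toRadialSolution (hv : IsClassicalSolution (n + 1) R t₁ t₂ b v) (hR : 0 < R)
    (hb : ContDiffOn ℝ 1 (uncurry b) (cylinder R t₁ t₂)) (hb0 : ∀ t ∈ Ioo t₁ t₂, b 0 t = n)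
    (hv0 : ∀ t ∈ Ioo t₁ t₂, v 0 t = 0) (hvR : ∀ t ∈ Ioo t₁ t₂, v R t = 0) :
    RadialSolution n R t₁ t₂ where
  q := radialQuotient R t₁ t₂ (uncurry v)
  qt := radialQuotient R t₁ t₂ (dsWithin (cylinder R t₁ t₂) (uncurry v))
  vr := curry (dxWithin (cylinder R t₁ t₂) (uncurry v))
  vrr := curry (dxWithin (cylinder R t₁ t₂) (dxWithin (cylinder R t₁ t₂) (uncurry v)))
  vrt := curry (dxWithin (cylinder R t₁ t₂) (dsWithin (cylinder R t₁ t₂) (uncurry v)))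
  β := radialQuotient R t₁ t₂ fun p => n - b p.1 p.2
  continuousOn_q := continuousOn_radialQuotient hR hv.contDiffOn_one hv0
  continuousOn_qt := continuousOn_radialQuotient hR (hv.contDiffOn_dsWithin hR)
    fun _ => hv.dsWithin_eq_zero ⟨le_rfl, hR.le⟩ hv0
  continuousOn_vr := (hv.contDiffOn_dxWithin hR).continuousOn
  continuousOn_vrt := (RescaledLimit.contDiffOn_dxWithin (m := 0) (hv.contDiffOn_dsWithin hR)
    (uniqueDiffOn_cylinder hR) (by simp)).continuousOn
  continuousOn_β := continuousOn_radialQuotient hR (contDiffOn_const.sub hb) fun t ht => by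
    rw [hb0 t ht, sub_self]
  hasDerivAt_q hr ht := hasDerivAt_radialQuotient hv.contDiffOn_one hr ht
  hasDerivAt_v hr ht := hasDerivAt_mul_radialQuotient hv.contDiffOn_one (hv0 _ ht) hr ht
  hasDerivAt_vt hr ht := hasDerivAt_mul_radialQuotient (hv.contDiffOn_dsWithin hR)
    (hv.dsWithin_eq_zero ⟨le_rfl, hR.le⟩ hv0 ht) hr ht
  hasDerivAt_vr_left hr ht := hasDerivAt_dxWithin_cylinder (hv.contDiffOn_dxWithin hR) hr ht
  hasDerivAt_vr_right hr ht :=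
    (hasDerivAt_dsWithin_cylinder (hv.contDiffOn_dxWithin hR) (Ioo_subset_Icc_self hr)
      ht).congr_deriv
        (dsWithin_dxWithin_cylinder_comm (hv.contDiffOn.of_le (by norm_cast)) hr ht)
  q_boundary ht := by
    rw [radialQuotient_eq_div hR.ne', uncurry_apply_pair, hvR _ ht, zero_div]
  qt_boundary ht := by
    rw [radialQuotient_eq_div hR.ne', hv.dsWithin_eq_zero ⟨hR.le, le_rfl⟩ hvR ht, zero_div]
  equation {r t} hr ht := by
    have hr0 := hr.1.ne'
    rw [← eq_mul_radialQuotient (hv.dsWithin_eq_zero ⟨le_rfl, hR.le⟩ hv0 ht),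
      hv.equation_within hr ht, radialQuotient_eq_div hr0, radialQuotient_eq_div hr0]
    simp only [curry_apply, uncurry_apply_pair, add_sub_cancel_right]
    field_simp
    ring

theorem eq_zero_of_eq_zero_at (hv : IsClassicalSolution (n + 1) R t₁ t₂ b v) (hn : n ≠ 0)
    (hR : 0 < R) (hb : ContDiffOn ℝ 1 (uncurry b) (cylinder R t₁ t₂))
    (hb0 : ∀ t ∈ Ioo t₁ t₂, b 0 t = n) (hv0 : ∀ t ∈ Ioo t₁ t₂, v 0 t = 0)
    (hvR : (∀ t ∈ Ioo t₁ t₂, v R t = 0) ∨ ∀ t ∈ Ioo t₁ t₂, v R t ≠ 0) (ht₀ : t₀ ∈ Ioo t₁ t₂)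
    (hzero : ∀ r ∈ Icc 0 R, v r t₀ = 0) : ∀ r ∈ Icc 0 R, ∀ t ∈ Ioo t₁ t₂, v r t = 0 := by
  replace hvR := hvR.resolve_right fun h => h t₀ ht₀ (hzero R ⟨hR.le, le_rfl⟩)
  let S := hv.toRadialSolution hR hb hb0 hv0 hvR
  have hS (r : ℝ) {t : ℝ} (ht : t ∈ Ioo t₁ t₂) : v r t = r * S.q r t :=
    eq_mul_radialQuotient (f := uncurry v) (hv0 t ht)
  intro r hr t ht
  rcases hr.1.eq_or_lt with rfl | hpos
  · exact hv0 t ht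
  · rw [hS r ht, S.eq_zero_of_eq_zero_at hn hR.le ht₀
      (fun x hx => (hS x ht₀).symm.trans (hzero x hx)) ht ⟨hpos, hr.2⟩, mul_zero]

end IsClassicalSolution

section Localization

lemma exists_contDiff_tsupport_subset_eventuallyEq {E : Type*} [NormedAddCommGroup E]
    [NormedSpace ℝ E] [FiniteDimensional ℝ E] {f : E → ℝ} {U : Set E} {p : E} (hU : IsOpen U)
    (hf : ContDiffOn ℝ ∞ f U) (hp : p ∈ U) :
    ∃ u, ContDiff ℝ ∞ u ∧ tsupport u ⊆ U ∧ u =ᶠ[𝓝 p] f := by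
  obtain ⟨ρ, hρ, hball⟩ := Metric.isOpen_iff.1 hU p hp
  let χ : ContDiffBump p := ⟨ρ / 4, ρ / 2, by positivity, by linarith⟩
  have hsub : tsupport (fun q => χ q * f q) ⊆ U :=
    (tsupport_mul_subset_left.trans_eq χ.tsupport_eq).trans
      ((Metric.closedBall_subset_ball (half_lt_self hρ)).trans hball)
  have hsmooth := contMDiff_of_tsupport fun q hq =>
    (χ.contDiff.contDiffAt.mul (hf.contDiffAt (hU.mem_nhds (hsub hq)))).contMDiffAt
  refine ⟨_, hsmooth.contDiff, hsub, ?_⟩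
  filter_upwards [χ.eventuallyEq_one] with q hq
  rw [hq, Pi.one_apply, one_mul]

variable {u : ℝ × ℝ → ℝ} {g : ℝ → ℝ → ℝ} {r t x s : ℝ}

lemma dx_eq_deriv_of_eventuallyEq (hu : Differentiable ℝ u)
    (h : u =ᶠ[𝓝 (x, s)] fun q => g (r + q.1) (t - q.2)) :
    dx u (x, s) = deriv (fun y => g y (t - s)) (r + x) := by
  have hslice : (fun y => u (y, s)) =ᶠ[𝓝 x] fun y => g (r + y) (t - s) :=
    h.comp_tendsto (Continuous.tendsto (by fun_prop : Continuous fun y => (y, s)) x)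
  rw [← (hasDerivAt_dx (hu (x, s))).deriv, hslice.deriv_eq,
    deriv_comp_const_add (f := fun y => g y (t - s))]

lemma ds_eq_neg_deriv_of_eventuallyEq (hu : Differentiable ℝ u)
    (h : u =ᶠ[𝓝 (x, s)] fun q => g (r + q.1) (t - q.2)) :
    ds u (x, s) = -deriv (g (r + x)) (t - s) := by
  have hslice : (fun τ => u (x, τ)) =ᶠ[𝓝 s] fun τ => g (r + x) (t - τ) :=
    h.comp_tendsto (Continuous.tendsto (by fun_prop : Continuous fun τ => (x, τ)) s)
  rw [← (hasDerivAt_ds (hu (x, s))).deriv, hslice.deriv_eq, deriv_comp_const_sub]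

lemma dx_dx_eq_deriv_of_eventuallyEq (hu : ContDiff ℝ ∞ u)
    (h : u =ᶠ[𝓝 (x, s)] fun q => g (r + q.1) (t - q.2)) :
    dx (dx u) (x, s) = deriv (deriv fun y => g y (t - s)) (r + x) :=
  dx_eq_deriv_of_eventuallyEq (g := fun y τ => deriv (fun z => g z τ) y)
    ((contDiff_dx hu).differentiable (by simp)) <|
    h.eventuallyEq_nhds.mono fun _ hq =>
      dx_eq_deriv_of_eventuallyEq (hu.differentiable (by simp)) hq

lemma exists_backwardHeatInequality {α β : ℝ × ℝ → ℝ} (hα : ContinuousAt α 0)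
    (hβ : ContinuousAt β 0)
    (h : ∀ᶠ q in 𝓝 0, ds u q + dx (dx u) q = α q * u q + β q * dx u q) :
    ∃ C δ, 0 < δ ∧ δ ≤ 1 ∧ BackwardHeatInequality C δ u := by
  obtain ⟨ρ, hρ, hball⟩ := Metric.eventually_nhds_iff.1
    (h.and ((hα.abs.eventually_lt continuousAt_const (lt_add_one _)).and
      (hβ.abs.eventually_lt continuousAt_const (lt_add_one _))))
  refine ⟨max (|α 0| + 1) (|β 0| + 1), min (ρ / 2) 1, by positivity, min_le_right _ _,
    fun x s hx hs hsδ => ?_⟩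
  have hmin := min_le_left (ρ / 2) 1
  obtain ⟨heq, hαC, hβC⟩ := hball (y := (x, s)) <| by
    rw [Prod.dist_eq, max_lt_iff]
    simp only [Prod.fst_zero, Prod.snd_zero, dist_zero_right, Real.norm_eq_abs, abs_of_nonneg hs]
    constructor <;> linarith
  rw [heq, mul_add]
  refine (abs_add_le _ _).trans (add_le_add ?_ ?_) <;> rw [abs_mul] <;> gcongr
  · exact hαC.le.trans (le_max_left _ _)
  · exact hβC.le.trans (le_max_right _ _)

lemma iterate_dx_apply (hu : ContDiff ℝ ∞ u) (i : ℕ) (x s : ℝ) :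
    (dx^[i] u) (x, s) = iteratedDeriv i (fun y => u (y, s)) x := by
  induction i generalizing u with
  | zero => rfl
  | succ n ih =>
    have hd : deriv (fun y => u (y, s)) = fun y => dx u (y, s) :=
      funext fun y => (hasDerivAt_dx (hu.differentiable (by simp) (y, s))).deriv
    rw [iterate_succ_apply, ih (contDiff_dx hu), iteratedDeriv_succ', hd]

lemma jet_eq_zero_of_frequently (hu : ContDiff ℝ ∞ u)
    (h : ∃ᶠ x in 𝓝 0, (fun y => u (y, 0)) =ᶠ[𝓝 x] 0) (i : ℕ) : jet u i 0 = 0 := by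
  have hclosed : IsClosed {x : ℝ | (dx^[i] u) (x, 0) = 0} :=
    isClosed_eq ((contDiff_iterate_dx hu i).continuous.comp (by fun_prop)) continuous_const
  refine hclosed.mem_of_frequently_of_tendsto (h.mono fun x hx => ?_) tendsto_id
  change (dx^[i] u) (x, 0) = 0
  rw [iterate_dx_apply hu, hx.iteratedDeriv_eq, iteratedDeriv_const_zero]

end Localization

/-- `u (x, s)` is a smooth cut-off of `v (r + x) (t - s)` about the origin satisfying a backward
heat inequality there. -/
structure IsLocalModel (v : ℝ → ℝ → ℝ) (r t : ℝ) (u : ℝ × ℝ → ℝ) : Prop where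
  contDiff : ContDiff ℝ ∞ u
  supportedInStrip : SupportedInStrip 1 u
  eventuallyEq : u =ᶠ[𝓝 0] fun q => v (r + q.1) (t - q.2)
  exists_backwardHeatInequality : ∃ C δ, 0 < δ ∧ δ ≤ 1 ∧ BackwardHeatInequality C δ u

namespace IsLocalModel

variable {v : ℝ → ℝ → ℝ} {r t : ℝ} {u : ℝ × ℝ → ℝ}

lemma eventuallyEq_slice (hu : IsLocalModel v r t u) :
    (fun x => u (x, 0)) =ᶠ[𝓝 0] fun x => v (r + x) t := by
  have hembed : Tendsto (fun x : ℝ => (x, (0 : ℝ))) (𝓝 0) (𝓝 0) :=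
    Continuous.tendsto' (by fun_prop) 0 0 rfl
  exact (hembed.eventually hu.eventuallyEq).mono fun x hx => by simpa using hx

lemma notMem_tsupport_of_jet_eq_zero (hu : IsLocalModel v r t u) (hjet : ∀ i j, jet u i j = 0) :
    r ∉ tsupport fun y => v y t := by
  obtain ⟨C, δ, hδ, hδ1, hC⟩ := hu.exists_backwardHeatInequality
  have hzero : ∀ᶠ x in 𝓝 0, v (r + x) t = 0 := by
    filter_upwards [hu.eventuallyEq_slice, Metric.closedBall_mem_nhds 0 (half_pos hδ)] with x hx hxδ
    rw [← hx]
    exact hC.eq_zero_of_jet_eq_zero hu.contDiff le_rfl hu.supportedInStrip hδ (by linarith) hδ1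
      hjet (by simpa using hxδ)
  rw [notMem_tsupport_iff_eventuallyEq]
  have hshift : Tendsto (fun y => y - r) (𝓝 r) (𝓝 0) :=
    Continuous.tendsto' (by fun_prop) _ _ (sub_self r)
  exact (hshift.eventually hzero).mono fun y hy => by simpa using hy

lemma exists_hermite_blowup (hu : IsLocalModel v r t u) (hne : ∃ i j, jet u i j ≠ 0) :
    ∃ (k : ℕ) (p : Polynomial ℝ), p ≠ 0 ∧ IsHermite k p ∧
      TendstoC2OnCompacts (fun ε x => ε ^ (-(k : ℤ)) * v (r + ε * x) (t - ε ^ 2))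
        (fun x => p.eval x) := by
  obtain ⟨C, δ, hδ, -, hC⟩ := hu.exists_backwardHeatInequality
  obtain ⟨k, p, hp, hH, -, hlim⟩ := hC.exists_hermite_blowup hu.contDiff hδ hne
  refine ⟨k, p, hp, hH, hlim.congr fun A => ?_⟩
  obtain ⟨ρ, hρ, hball⟩ := Metric.eventually_nhds_iff.1 hu.eventuallyEq
  have hc : 0 < min (ρ / 2) 1 := by positivity
  filter_upwards [eventually_abs_mul_le A hc] with ε ⟨hε, hεc, hεA⟩ x hx
  have hερ : ε ^ 2 ≤ ρ / 2 := by nlinarith [le_min_iff.1 hεc]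
  have hxρ := (hεA x (Ioo_subset_Icc_self hx)).trans (min_le_left _ _)
  refine congrArg (ε ^ (-(k : ℤ)) * ·) (hball (y := (ε * x, ε ^ 2)) ?_)
  rw [Prod.dist_eq, max_lt_iff]
  simp only [Prod.fst_zero, Prod.snd_zero, dist_zero_right, Real.norm_eq_abs, abs_pow, sq_abs]
  constructor <;> linarith

lemma jet_eq_zero_of_mem_closure (hu : IsLocalModel v r t u)
    (hr : r ∈ closure (tsupport fun y => v y t)ᶜ) (i j : ℕ) : jet u i j = 0 := by
  obtain ⟨C, δ, hδ, -, hC⟩ := hu.exists_backwardHeatInequality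
  have hshift : ∃ᶠ x in 𝓝 0, r + x ∉ tsupport fun y => v y t := by
    rw [mem_closure_iff_frequently, ← map_add_left_nhds_zero] at hr
    exact hr
  have hfreq : ∃ᶠ x in 𝓝 0, (fun y => u (y, 0)) =ᶠ[𝓝 x] 0 := by
    refine (hshift.and_eventually hu.eventuallyEq_slice.eventuallyEq_nhds).mono
      fun x ⟨hx, hux⟩ => ?_
    rw [notMem_tsupport_iff_eventuallyEq] at hx
    exact hux.trans (hx.comp_tendsto (continuous_const_add r).continuousAt)
  by_contra hne
  obtain ⟨k, -, -, -, hk, -⟩ := hC.exists_hermite_blowup hu.contDiff hδ ⟨i, j, hne⟩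
  exact hk (jet_eq_zero_of_frequently hu.contDiff hfreq k)

end IsLocalModel

namespace IsClassicalSolution

variable {m R t₁ t₂ r t : ℝ} {n : ℕ} {b v : ℝ → ℝ → ℝ}

lemma exists_isLocalModel (hv : IsClassicalSolution m R t₁ t₂ b v)
    (hb : ContinuousOn (uncurry b) (cylinder R t₁ t₂)) (hr : r ∈ Ioo 0 R) (ht : t ∈ Ioo t₁ t₂) :
    ∃ u, IsLocalModel v r t u := by
  set shift : ℝ × ℝ → ℝ × ℝ := fun q => (r + q.1, t - q.2) with hshift
  have hshiftc : ContDiff ℝ ∞ shift := by fun_prop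
  set U := shift ⁻¹' (Ioo 0 R ×ˢ Ioo t₁ t₂) with hU_def
  have hU : IsOpen U := (isOpen_Ioo.prod isOpen_Ioo).preimage hshiftc.continuous
  have h0 : (0 : ℝ × ℝ) ∈ U := by simpa [hU_def, hshift] using ⟨hr, ht⟩
  have hUsub : MapsTo shift U (cylinder R t₁ t₂) := fun q hq => ⟨Ioo_subset_Icc_self hq.1, hq.2⟩
  have hstrip : IsOpen {p : ℝ × ℝ | |p.1| < 1} := isOpen_lt (by fun_prop) continuous_const
  obtain ⟨u, hu, hsupp, heq⟩ := exists_contDiff_tsupport_subset_eventuallyEq (hU.inter hstrip)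
    ((hv.contDiffOn.comp hshiftc.contDiffOn hUsub).mono inter_subset_left) ⟨h0, by simp⟩
  have hbshift : ContinuousAt (fun q => b (shift q).1 (shift q).2) 0 :=
    (hb.comp hshiftc.continuous.continuousOn hUsub).continuousAt (hU.mem_nhds h0)
  have hr0 : r + (0 : ℝ × ℝ).1 ≠ 0 := by simpa using hr.1.ne'
  refine ⟨u, hu, hsupp.trans inter_subset_right, heq, exists_backwardHeatInequality
    (α := fun q => b (shift q).1 (shift q).2 / (r + q.1) ^ 2) (β := fun q => -((m - 1) / (r + q.1)))
    (hbshift.div (by fun_prop) (pow_ne_zero 2 hr0)) (by fun_prop (disch := assumption)) ?_⟩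
  filter_upwards [heq.eventuallyEq_nhds, hU.mem_nhds h0] with q hq hqU
  have hdiff := hu.differentiable (by simp)
  have hpde := hv.equation _ hqU.1 _ hqU.2
  rw [ds_eq_neg_deriv_of_eventuallyEq (g := v) hdiff hq,
    dx_dx_eq_deriv_of_eventuallyEq (g := v) hu hq, dx_eq_deriv_of_eventuallyEq (g := v) hdiff hq,
    hq.self_of_nhds, hpde]
  simp only [hshift, comp_apply, uncurry_apply_pair]
  ring

lemma eq_zero_of_notMem_tsupport (hv : IsClassicalSolution m R t₁ t₂ b v)
    (hb : ContinuousOn (uncurry b) (cylinder R t₁ t₂)) (hr : r ∈ Ioo 0 R) (ht : t ∈ Ioo t₁ t₂)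
    (hr0 : r ∉ tsupport fun y => v y t) {x : ℝ} (hx : x ∈ Icc 0 R) : v x t = 0 := by
  have hR : 0 < R := hr.1.trans hr.2
  have hsub : Ioo 0 R ⊆ (tsupport fun y => v y t)ᶜ := by
    refine isPreconnected_Ioo.subset_of_closure_inter_subset
      (isClosed_tsupport _).isOpen_compl ⟨r, hr, hr0⟩ ?_
    rintro y ⟨hy_closure, hy⟩
    obtain ⟨u, hu⟩ := hv.exists_isLocalModel hb hy ht
    exact hu.notMem_tsupport_of_jet_eq_zero (hu.jet_eq_zero_of_mem_closure hy_closure)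
  have hcont : ContinuousOn (fun y => v y t) (Icc 0 R) :=
    hv.contDiffOn.continuousOn.comp (f := fun y => (y, t)) (by fun_prop) fun y hy => ⟨hy, ht⟩
  have hzero : EqOn (fun y => v y t) 0 (Ioo 0 R) := fun y hy =>
    image_eq_zero_of_notMem_tsupport (f := fun y => v y t) (hsub hy)
  exact hzero.of_subset_closure hcont continuousOn_const Ioo_subset_Icc_self
    (closure_Ioo hR.ne).ge hx

end IsClassicalSolution

end RescaledLimit

open RescaledLimit Function in
theorem rescaled_limit_away_from_origin_general {m : ℕ} (hm : 2 ≤ m) {R t₁ t₂ : ℝ}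
    {b v : ℝ → ℝ → ℝ} (hb : ContDiffOn ℝ 1 (uncurry b) (Icc 0 R ×ˢ Ioo t₁ t₂))
    (hb0 : ∀ t ∈ Ioo t₁ t₂, b 0 t = (m : ℝ) - 1) (hv : IsClassicalSolution m R t₁ t₂ b v)
    (hvR : (∀ t ∈ Ioo t₁ t₂, v R t = 0) ∨ ∀ t ∈ Ioo t₁ t₂, v R t ≠ 0)
    (hv0 : ∀ t ∈ Ioo t₁ t₂, v 0 t = 0)
    (hnz : ¬ ∀ r ∈ Icc 0 R, ∀ t ∈ Ioo t₁ t₂, v r t = 0) {t₀ r₀ : ℝ} (ht₀ : t₀ ∈ Ioo t₁ t₂)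
    (hr₀ : r₀ ∈ Ioo 0 R) :
    ∃ (k : ℕ) (p : Polynomial ℝ), p ≠ 0 ∧ IsHermite k p ∧
      TendstoC2OnCompacts (fun ε r => ε ^ (-(k : ℤ)) * v (r₀ + ε * r) (t₀ - ε ^ 2))
        (fun x => p.eval x) := by
  obtain ⟨n, rfl⟩ : ∃ n, m = n + 1 := ⟨m - 1, by omega⟩
  push_cast at hv hb0
  simp only [add_sub_cancel_right] at hb0
  obtain ⟨u, hu⟩ := hv.exists_isLocalModel hb.continuousOn hr₀ ht₀
  refine hu.exists_hermite_blowup (by_contra fun hjet => hnz ?_)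
  push Not at hjet
  exact hv.eq_zero_of_eq_zero_at (by omega) (hr₀.1.trans hr₀.2) hb hb0 hv0 hvR ht₀ fun r hr =>
    hv.eq_zero_of_notMem_tsupport hb.continuousOn hr₀ ht₀
      (hu.notMem_tsupport_of_jet_eq_zero hjet) hr

theorem rescaled_limit_away_from_origin
    (m : ℕ) (hm : 2 ≤ m) (R t1 t2 : ℝ) (hR : 0 < R) (ht12 : t1 < t2)
    (b v : ℝ → ℝ → ℝ)
    (hb_smooth : ContDiffOn ℝ (⊤ : ℕ∞) (fun p : ℝ × ℝ => b p.1 p.2) (Icc 0 R ×ˢ Ioo t1 t2))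
    (hb_bdd : ∃ C : ℝ, ∀ r ∈ Icc (0:ℝ) R, ∀ t ∈ Ioo t1 t2, |b r t| ≤ C)
    (hb_deriv_bdd : ∃ C : ℝ, ∀ r ∈ Icc (0:ℝ) R, ∀ t ∈ Ioo t1 t2,
      |deriv (fun x => b x t) r| ≤ C ∧ |deriv (fun s => b r s) t| ≤ C)
    (hb0 : ∀ t ∈ Ioo t1 t2, b 0 t = (m : ℝ) - 1)
    (hbr0 : ∀ t ∈ Ioo t1 t2, deriv (fun x => b x t) 0 = 0)
    (hv_smooth : ContDiffOn ℝ (⊤ : ℕ∞) (fun p : ℝ × ℝ => v p.1 p.2) (Icc 0 R ×ˢ Ioo t1 t2))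
    (hpde : ∀ r ∈ Ioo (0:ℝ) R, ∀ t ∈ Ioo t1 t2,
      deriv (fun s => v r s) t =
        deriv (deriv (fun x => v x t)) r + (((m : ℝ) - 1) / r) * deriv (fun x => v x t) r
          - (b r t / r ^ 2) * v r t)
    (hbcR : (∀ t ∈ Ioo t1 t2, v R t = 0) ∨ (∀ t ∈ Ioo t1 t2, v R t ≠ 0))
    (hv0 : ∀ t ∈ Ioo t1 t2, v 0 t = 0)
    (hnz : ¬ ∀ r ∈ Icc (0:ℝ) R, ∀ t ∈ Ioo t1 t2, v r t = 0)
    :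
    ∀ t0 ∈ Ioo t1 t2, ∀ r0 ∈ Ioo (0:ℝ) R, ∃ (k : ℕ) (p : Polynomial ℝ), p ≠ 0 ∧
      (∀ r : ℝ,
        deriv (deriv fun x => p.eval x) r - (1 / 2) * r * deriv (fun x => p.eval x) r
          + ((k : ℝ) / 2) * p.eval r = 0) ∧
      (∀ A : ℝ, 0 < A →
        TendstoUniformlyOn (fun ε r => ε ^ (-(k : ℤ)) * v (r0 + ε * r) (t0 - ε ^ 2))
          (fun x => p.eval x) (nhdsWithin 0 (Ioi 0)) (Icc (-A) A) ∧
        TendstoUniformlyOn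
          (fun ε r => deriv (fun x => ε ^ (-(k : ℤ)) * v (r0 + ε * x) (t0 - ε ^ 2)) r)
          (deriv fun x => p.eval x) (nhdsWithin 0 (Ioi 0)) (Icc (-A) A) ∧
        TendstoUniformlyOn
          (fun ε r => deriv (deriv (fun x => ε ^ (-(k : ℤ)) * v (r0 + ε * x) (t0 - ε ^ 2))) r)
          (deriv (deriv fun x => p.eval x)) (nhdsWithin 0 (Ioi 0)) (Icc (-A) A)) :=
  fun _ ht0 _ hr0 => rescaled_limit_away_from_origin_general hm (hb_smooth.of_le (by norm_cast))
    hb0 ⟨hv_smooth, hpde⟩ hbcR hv0 hnz ht0 hr0
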